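/- arXiv:1504.04685 — 5 statements merged into one kernel-verified Lean document; each statement's English description precedes it below -/
import Mathlib

section
/- Let M be a finite-dimensional semisimple algebra over ℂ and let N be a semisimple subalgebra of M. Then the relative commutant Z(M,N) = {m ∈ M : mn = nm for all n ∈ N} is a semisimple algebra, and the following two conditions are equivalent: (1) the restriction to N of every finite-dimensional complex irreducible M-module is multiplicity free; (2) Z(M,N) is commutative. -/
/-!
Write `Z = Z(M,N)`. The relative commutant acts on every `M`-module `V` by `N`-endomorphisms. The
key fact (`centralizerToEnd_surjective`) is that `Z → End_N V` is surjective when `V` is a simple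
`M`-module: by Burnside's theorem an `N`-endomorphism of `V` is the action of some `m : M`, and
since the annihilator of `V` is generated by a central idempotent `e`, the element `(1 - e) m` acts
in the same way and commutes with `N`. Moreover `M` acts faithfully on its simple left ideals
(`eq_zero_of_forall_simple`), so `Z` embeds in the product of the rings `End_N V`.

* `Z` is artinian and its Jacobson radical maps into the Jacobson radical of each `End_N V`, which
  vanishes because `V` is a semisimple `N`-module of finite length. Hence the radical of `Z` is zero
  and `Z` is semisimple.
* By the above, `Z` is commutative if and only if all `End_N V` are, and `End_N V` is commutative
  if and only if `V` is multiplicity free over `N` (`isMultiplicityFree_of_comm`,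
  `comm_of_isMultiplicityFree`).
-/

/-- A module is multiplicity free if any two isomorphic simple submodules coincide; for
semisimple modules this says that each isomorphism class of irreducible module occurs at most
once in a decomposition into irreducibles. -/
def IsMultiplicityFree (R : Type*) [Ring R] (V : Type*) [AddCommGroup V] [Module R V] : Prop :=
  ∀ S T : Submodule R V, IsSimpleModule R S → IsSimpleModule R T →
    Nonempty (S ≃ₗ[R] T) → S = T

open Module

/-- Schur's lemma over `ℂ`: endomorphisms of a finite-dimensional simple module are scalars. -/
lemma exists_end_eq_smul {A V : Type*} [Ring A] [Algebra ℂ A] [AddCommGroup V] [Module ℂ V]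
    [Module A V] [IsScalarTower ℂ A V] [FiniteDimensional ℂ V] [IsSimpleModule A V]
    (f : End A V) : ∃ c : ℂ, ∀ v, f v = c • v := by
  classical
  have : FiniteDimensional ℂ (End A V) :=
    FiniteDimensional.of_injective (LinearMap.restrictScalarsₗ ℂ A V V ℂ)
      (LinearMap.restrictScalars_injective ℂ)
  obtain ⟨c, rfl⟩ :=
    (IsAlgClosed.algebraMap_bijective_of_isIntegral (k := ℂ) (K := End A V)).2 f
  exact ⟨c, fun v ↦ rfl⟩

/-- Burnside's theorem: the image of `A` in `End_ℂ V` is everything when `V` is simple. It is the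
density theorem, the double commutant being `End_ℂ V` by Schur's lemma. -/
lemma exists_smul_eq {A V : Type*} [Ring A] [Algebra ℂ A] [AddCommGroup V] [Module ℂ V]
    [Module A V] [IsScalarTower ℂ A V] [FiniteDimensional ℂ V] [IsSimpleModule A V]
    (f : V →ₗ[ℂ] V) : ∃ a : A, ∀ v, a • v = f v := by
  let g : End (End A V) V :=
    { f with
      map_smul' := fun d v ↦ by
        obtain ⟨c, hc⟩ := exists_end_eq_smul d
        simp [hc] }
  have : Module.Finite (End A V) V := .of_restrictScalars_finite ℂ _ _
  obtain ⟨a, ha⟩ := Module.Finite.toModuleEnd_moduleEnd_surjective (R := A) (M := V) g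
  exact ⟨a, fun v ↦ congr($ha v)⟩

/-- A semisimple ring is semiprime: the left ideal of `y` has square zero, but is generated by an
idempotent. -/
lemma eq_zero_of_forall_mul_mul_eq_zero {A : Type*} [Ring A] [IsSemisimpleRing A] {y : A}
    (h : ∀ a, y * a * y = 0) : y = 0 := by
  obtain ⟨f, hf, hI⟩ := IsSemisimpleRing.ideal_eq_span_idempotent (Ideal.span {y})
  obtain ⟨a, ha⟩ := Ideal.mem_span_singleton'.1
    (show f ∈ Ideal.span {y} from hI ▸ Ideal.mem_span_singleton_self f)
  obtain ⟨b, hb⟩ := Ideal.mem_span_singleton'.1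
    (show y ∈ Ideal.span {f} from hI ▸ Ideal.mem_span_singleton_self y)
  have : f = 0 := by
    rw [← hf.eq, ← ha, show a * y * (a * y) = a * (y * a * y) by noncomm_ring, h, mul_zero]
  rw [← hb, this, mul_zero]

/-- The annihilator of any module over a semisimple ring is generated by a central idempotent. -/
lemma exists_central_annihilator {A : Type*} (V : Type*) [Ring A] [IsSemisimpleRing A]
    [AddCommGroup V] [Module A V] :
    ∃ e : A, (∀ v : V, e • v = 0) ∧ (∀ a, e * a = a * e) ∧
      ∀ x : A, (∀ v : V, x • v = 0) → x * e = x := by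
  obtain ⟨e, he, hI⟩ := IsSemisimpleRing.ideal_eq_span_idempotent (annihilator A V)
  have he0 : ∀ v : V, e • v = 0 :=
    mem_annihilator.1 (hI ▸ Ideal.mem_span_singleton_self e)
  have hx : ∀ x : A, (∀ v : V, x • v = 0) → x * e = x := fun x h ↦ by
    obtain ⟨b, rfl⟩ := Ideal.mem_span_singleton'.1 (hI ▸ mem_annihilator.2 h)
    rw [mul_assoc, he.eq]
  refine ⟨e, he0, fun a ↦ ?_, hx⟩
  have h1 : e * a * e = e * a := hx _ fun v ↦ by rw [mul_smul, he0]
  -- The remaining Peirce component `(1 - e) a e` generates a left ideal of square zero.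
  have h2 : a * e - e * a * e = 0 := by
    refine eq_zero_of_forall_mul_mul_eq_zero fun b ↦ ?_
    have h3 : e * b * e = e * b := hx _ fun v ↦ by rw [mul_smul, he0]
    calc (a * e - e * a * e) * b * (a * e - e * a * e)
        = (a - e * a) * (e * b - e * b * e) * (a * e) := by noncomm_ring
      _ = 0 := by rw [h3, sub_self, mul_zero, zero_mul]
  rw [← h1]
  exact (sub_eq_zero.1 h2).symm

/-- The action of the relative commutant `Z(M,N)` on an `M`-module by `N`-endomorphisms. -/
def centralizerToEnd {M : Type} [Ring M] [Algebra ℂ M] (N : Subalgebra ℂ M) (V : Type)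
    [AddCommGroup V] [Module M V] :
    Subalgebra.centralizer ℂ (N : Set M) →+* End N V where
  toFun z :=
    { toFun := fun v ↦ (z : M) • v
      map_add' := smul_add _
      map_smul' := fun n v ↦ by
        change (z : M) • (n : M) • v = (n : M) • (z : M) • v
        rw [smul_smul, smul_smul, Subalgebra.mem_centralizer_iff ℂ |>.1 z.2 n n.2] }
  map_one' := by ext v; exact one_smul M v
  map_zero' := by ext v; exact zero_smul M v
  map_mul' a b := by ext v; exact mul_smul (a : M) (b : M) v
  map_add' a b := by ext v; exact add_smul (a : M) (b : M) v

@[simp] lemma centralizerToEnd_apply {M V : Type} [Ring M] [Algebra ℂ M] [AddCommGroup V]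
    [Module M V] (N : Subalgebra ℂ M) (z : Subalgebra.centralizer ℂ (N : Set M))
    (v : V) :
    centralizerToEnd N V z v = (z : M) • v := rfl

/-- Lift an `N`-endomorphism to `m : M` by Burnside, then cut `m` down to the block of `M` acting
faithfully on `V`; there, commuting with `N` can be tested on `V`. -/
lemma centralizerToEnd_surjective {M V : Type} [Ring M] [Algebra ℂ M] [AddCommGroup V]
    [Module ℂ V] [Module M V] [IsScalarTower ℂ M V] (N : Subalgebra ℂ M)
    [IsSemisimpleRing M] [FiniteDimensional ℂ V] [IsSimpleModule M V] : Function.Surjective (centralizerToEnd N V) := by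
  intro f
  obtain ⟨m, hm⟩ := exists_smul_eq (A := M) (f.restrictScalars ℂ)
  obtain ⟨e, he0, hec, he⟩ := exists_central_annihilator (A := M) V
  refine ⟨⟨m - e * m, Subalgebra.mem_centralizer_iff ℂ |>.2 fun n hn ↦ ?_⟩, ?_⟩
  · have h := he (n * m - m * n) fun v ↦ by
      have h1 : f (n • v) = n • f v := f.map_smul ⟨n, hn⟩ v
      rw [sub_smul, mul_smul, mul_smul, hm, hm]
      simp [h1]
    rw [← hec] at h
    calc n * (m - e * m) = (n * m - m * n) - (n * e) * m + m * n := by noncomm_ring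
      _ = e * (n * m - m * n) - (e * n) * m + m * n := by rw [h, hec n]
      _ = (m - e * m) * n := by noncomm_ring
  · ext v
    simp [sub_smul, mul_smul, he0, hm]

/-- A semisimple ring is the sum of its simple left ideals, so it acts faithfully on them. -/
lemma eq_zero_of_forall_simple {M : Type} [Ring M] [IsSemisimpleRing M] {x : M}
    (h : ∀ I : Submodule M M, IsSimpleModule M I → ∀ v : I, x • v = 0) : x = 0 := by
  have key : ∀ y ∈ sSup {I : Submodule M M | IsSimpleModule M I}, x * y = 0 := by
    intro y hy
    rw [sSup_eq_iSup'] at hy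
    induction hy using Submodule.iSup_induction' with
    | mem I y hy => exact congr_arg Subtype.val (h I I.2 ⟨y, hy⟩)
    | zero => exact mul_zero x
    | add a b _ _ ha hb => rw [mul_add, ha, hb, add_zero]
  simpa using key 1 (by simp [IsSemisimpleModule.sSup_simples_eq_top])

/-- An endomorphism `V → S ≃ T ⊆ V` commutes with a projection onto `S`, hence preserves `S`, so
that `T ≤ S`. -/
lemma isMultiplicityFree_of_comm {A V : Type*} [Ring A] [AddCommGroup V] [Module A V]
    [IsSemisimpleModule A V] (h : ∀ f g : End A V, f * g = g * f) : IsMultiplicityFree A V := by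
  rintro S T hS hT ⟨φ⟩
  obtain ⟨p, hp⟩ := IsSemisimpleModule.extension_property S.subtype S.subtype_injective LinearMap.id
  have hpS (s : S) : p s = s := congr($hp s)
  have hle : T ≤ S := fun t ht ↦ by
    have := congr($(h (T.subtype ∘ₗ φ.toLinearMap ∘ₗ p) (S.subtype ∘ₗ p)) (φ.symm ⟨t, ht⟩))
    simp [hpS] at this
    rw [this]
    exact Subtype.property _
  exact ((isSimpleModule_iff_isAtom.1 hS).le_iff_eq (isSimpleModule_iff_isAtom.1 hT).1).1 hle |>.symm

/-- If `V` is multiplicity free, every endomorphism preserves every simple submodule, and acts on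
it by a scalar. -/
lemma comm_of_isMultiplicityFree {A V : Type*} [Ring A] [Algebra ℂ A] [AddCommGroup V]
    [Module ℂ V] [Module A V] [IsScalarTower ℂ A V] [FiniteDimensional ℂ V]
    [IsSemisimpleModule A V] (h : IsMultiplicityFree A V) (f g : End A V) : f * g = g * f := by
  have scalar (f : End A V) (S : Submodule A V) (hS : IsSimpleModule A S) :
      ∃ c : ℂ, ∀ v ∈ S, f v = c • v := by
    have hmem : ∀ v ∈ S, f v ∈ S := fun v hv ↦ by
      rcases (f ∘ₗ S.subtype).injective_or_eq_zero with hi | h0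
      · let e := LinearEquiv.ofInjective _ hi
        have := h S _ hS (IsSimpleModule.congr e.symm) ⟨e⟩
        rw [this]
        exact ⟨⟨v, hv⟩, rfl⟩
      · have : f v = 0 := congr($h0 ⟨v, hv⟩)
        exact this ▸ S.zero_mem
    have : FiniteDimensional ℂ S := inferInstanceAs (FiniteDimensional ℂ (S.restrictScalars ℂ))
    obtain ⟨c, hc⟩ := exists_end_eq_smul (f.restrict hmem)
    exact ⟨c, fun v hv ↦ congr_arg Subtype.val (hc ⟨v, hv⟩)⟩
  ext v
  have hv : v ∈ sSup {S : Submodule A V | IsSimpleModule A S} := by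
    simp [IsSemisimpleModule.sSup_simples_eq_top]
  rw [sSup_eq_iSup'] at hv
  induction hv using Submodule.iSup_induction' with
  | mem S v hv =>
    obtain ⟨c, hc⟩ := scalar f S S.2
    obtain ⟨d, hd⟩ := scalar g S S.2
    have smul_comm' (k : End A V) (r : ℂ) : k (r • v) = r • k v := k.map_smul_of_tower r v
    simp only [End.mul_apply, hd v hv, hc v hv, smul_comm', smul_comm c d]
  | zero => simp
  | add a b _ _ ha hb => rw [map_add, map_add, ha, hb]

/-- Let `M` be a finite-dimensional semisimple algebra over `ℂ` and `N` a
semisimple subalgebra.  Then the relative commutant `Z(M,N)` (centralizer of `N` in `M`) is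
semisimple, and the restriction to `N` of every finite-dimensional complex irreducible
`M`-module is multiplicity free if and only if `Z(M,N)` is commutative. -/
theorem relative_commutant_semisimple_and_multFree_iff_comm
    (M : Type) [Ring M] [Algebra ℂ M] [FiniteDimensional ℂ M] [IsSemisimpleRing M]
    (N : Subalgebra ℂ M) [IsSemisimpleRing N] :
    IsSemisimpleRing (Subalgebra.centralizer ℂ (N : Set M)) ∧
    ((∀ (V : Type) [AddCommGroup V] [Module ℂ V] [Module M V] [IsScalarTower ℂ M V]
        [FiniteDimensional ℂ V], IsSimpleModule M V → IsMultiplicityFree N V) ↔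
      ∀ a b : Subalgebra.centralizer ℂ (N : Set M), a * b = b * a) := by
  have fin (I : Submodule M M) : FiniteDimensional ℂ I :=
    inferInstanceAs (FiniteDimensional ℂ (I.restrictScalars ℂ))
  refine ⟨?_, fun h a b ↦ ?_, fun h V _ _ _ _ _ hV ↦ ?_⟩
  · have : IsArtinianRing (Subalgebra.centralizer ℂ (N : Set M)) := .of_finite ℂ _
    rw [IsArtinianRing.isSemisimpleRing_iff_jacobson, eq_bot_iff]
    intro z hz
    refine Subtype.ext (eq_zero_of_forall_simple fun I hI v ↦ ?_)
    have : RingHomSurjective (centralizerToEnd N I) := ⟨centralizerToEnd_surjective N⟩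
    have : Module.Finite N I := .of_restrictScalars_finite ℂ _ _
    have := IsSemisimpleRing.moduleEnd N I
    have h0 := Ring.le_comap_jacobson (centralizerToEnd N I) hz
    rw [IsSemisimpleRing.jacobson_eq_bot] at h0
    exact congr($(show centralizerToEnd N I z = 0 from h0) v)
  · refine Subtype.ext (sub_eq_zero.1 (eq_zero_of_forall_simple fun I hI v ↦ ?_))
    have := comm_of_isMultiplicityFree (h I hI) (centralizerToEnd N I a) (centralizerToEnd N I b)
    rw [← map_mul, ← map_mul] at this
    rw [sub_smul, sub_eq_zero]
    exact congr($this v)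
  · refine isMultiplicityFree_of_comm fun f g ↦ ?_
    obtain ⟨a, rfl⟩ := centralizerToEnd_surjective N f
    obtain ⟨b, rfl⟩ := centralizerToEnd_surjective N g
    rw [← map_mul, ← map_mul, h]
end

section
/- The number of conjugacy classes of the wreath product G≀S_n equals the number of functions ρ from the set of conjugacy classes of G to the set of integer partitions such that the sum over all conjugacy classes C of G of |ρ(C)| (the size of the partition ρ(C)) equals n. -/
/-!
An element `(f, π)` of `G ≀ Sₙ` is a permutation of `Fin n` labelled by elements of `G`. Two
elements are conjugate exactly when the labelled permutations are isomorphic in the sense of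
`LabIso`: a relabelling `e` of the points together with a gauge transformation `H` of the labels.
This notion makes sense on arbitrary index types, so conjugacy classes can be compared with a
normal form `stdPerm`, `stdLab`: a disjoint union of cycles `Fin (ℓ q)`, `q : Q`, all of whose
labels are `1` except for one label `g q` on each cycle.

* Every labelled permutation is isomorphic to a normal form (`labIso_std`): choose a starting
  point in each cycle and let `H` be the partial products of the labels along the cycle. Only the
  conjugacy class of the total product matters. Hence the classes are exhausted by the normal
  forms attached to the functions `ρ`, with one cycle of length `x` and label `C.out` for every
  occurrence of `x` in `ρ C`.
* The number of points with cycle length `k` and cycle product in the class `C` is an isomorphism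
  invariant (`LabIso.invt_eq`), because partial products telescope under gauge transformations.
  For the normal form of `ρ` this number is `k * (ρ C).count k` (`invt_stdOf`), so for positive
  parts it determines `ρ`.
-/

/-- The action of `Equiv.Perm (Fin n)` on `Fin n → G` by permuting coordinates. -/
def wreathHom (G : Type*) [Group G] (n : ℕ) : Equiv.Perm (Fin n) →* MulAut (Fin n → G) where
  toFun π := MulEquiv.arrowCongr π (MulEquiv.refl G)
  map_one' := by ext f i; rfl
  map_mul' := by intro π σ; ext f i; rfl

/-- The wreath product `G ≀ Sₙ`. -/
abbrev WreathProduct (G : Type*) [Group G] (n : ℕ) :=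
  SemidirectProduct (Fin n → G) (Equiv.Perm (Fin n)) (wreathHom G n)

/-- The cycle product of `h = (g₁,…,gₙ,π) ∈ G≀Sₙ` along the cycle of `π` through `i`:
if the cycle through `i = i₁` is `(i₁,…,i_k)` (so `i_j = π^{j-1} i`), this is
`g_{i_k} g_{i_{k-1}} ⋯ g_{i₁}`. -/
noncomputable def cycleProd {G : Type*} [Group G] {n : ℕ} (h : WreathProduct G n) (i : Fin n) : G :=
  (((List.range (Function.minimalPeriod (⇑h.right) i)).map
      fun j => h.left ((h.right ^ j) i)).reverse).prod

/- The type of an element `h ∈ G≀Sₙ`: to each conjugacy class `C` of `G` it assigns the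
multiset of lengths of the cycles of the permutation part of `h` whose cycle product lies
in `C`.  (Each cycle is counted exactly once, via its minimal element.) -/
open Classical in
noncomputable def wrType {G : Type*} [Group G] {n : ℕ} (h : WreathProduct G n) :
    ConjClasses G → Multiset ℕ := fun C =>
  ((Finset.univ.filter fun i : Fin n =>
      (∀ k : ℕ, i ≤ (h.right ^ k) i) ∧ ConjClasses.mk (cycleProd h i) = C).val).map
    fun i => Function.minimalPeriod (⇑h.right) i

section LabelledPerm

variable {G : Type} [Group G]

/-- The ordered product `f(πᵏ i) ⋯ f(π² i) f(π i)` of the labels met in the first `k` steps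
from `i`; the label of `i` itself is met when the cycle closes up. -/
def partProd {ι : Type} (π : Equiv.Perm ι) (f : ι → G) : ℕ → ι → G
  | 0, _ => 1
  | k + 1, i => f (π^[k + 1] i) * partProd π f k i

/-- The length of the cycle through `i`, and the conjugacy class of the product of the labels
once around that cycle. -/
noncomputable def cycLabel {ι : Type} (π : Equiv.Perm ι) (f : ι → G) (i : ι) : ConjClasses G × ℕ :=
  (ConjClasses.mk (partProd π f (Function.minimalPeriod π i) i), Function.minimalPeriod π i)

/-- Isomorphism of labelled permutations: an equivalence `e` of the index types intertwining the
permutations, and a gauge transformation `H` carrying the labels to each other. For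
`ι = ι' = Fin n` this is conjugacy in the wreath product. -/
def LabIso {ι ι' : Type} (π : Equiv.Perm ι) (f : ι → G) (π' : Equiv.Perm ι') (f' : ι' → G) : Prop :=
  ∃ (e : ι ≃ ι') (H : ι → G), ∀ i, e (π i) = π' (e i) ∧ f' (π' (e i)) * H i = H (π i) * f (π i)

theorem LabIso.symm {ι ι' : Type} {π : Equiv.Perm ι} {f : ι → G} {π' : Equiv.Perm ι'} {f' : ι' → G}
    (h : LabIso π f π' f') : LabIso π' f' π f := by
  obtain ⟨e, H, h⟩ := h
  refine ⟨e.symm, fun i => (H (e.symm i))⁻¹, fun i => ?_⟩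
  obtain ⟨h1, h2⟩ := h (e.symm i)
  rw [Equiv.apply_symm_apply] at h1 h2
  have h3 : e.symm (π' i) = π (e.symm i) := by rw [← h1, Equiv.symm_apply_apply]
  refine ⟨h3, ?_⟩
  simp only [h3]
  rw [mul_inv_eq_iff_eq_mul, mul_assoc, h2, inv_mul_cancel_left]

theorem LabIso.trans {ι ι' ι'' : Type} {π : Equiv.Perm ι} {f : ι → G} {π' : Equiv.Perm ι'}
    {f' : ι' → G} {π'' : Equiv.Perm ι''} {f'' : ι'' → G}
    (h : LabIso π f π' f') (h' : LabIso π' f' π'' f'') : LabIso π f π'' f'' := by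
  obtain ⟨e, H, h⟩ := h
  obtain ⟨e', H', h'⟩ := h'
  refine ⟨e.trans e', fun i => H' (e i) * H i, fun i => ?_⟩
  obtain ⟨h1, h2⟩ := h i
  obtain ⟨h3, h4⟩ := h' (e i)
  refine ⟨by simp [h1, h3], ?_⟩
  simp only [Equiv.trans_apply, h1]
  rw [← mul_assoc, h4, mul_assoc, h2, mul_assoc]

/-- Partial products telescope under a gauge transformation, so for full cycles they are merely
conjugated. -/
theorem cycLabel_eq {ι ι' : Type} {π : Equiv.Perm ι} {f : ι → G} {π' : Equiv.Perm ι'} {f' : ι' → G}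
    (e : ι ≃ ι') (H : ι → G)
    (h : ∀ i, e (π i) = π' (e i) ∧ f' (π' (e i)) * H i = H (π i) * f (π i)) (i : ι) :
    cycLabel π' f' (e i) = cycLabel π f i := by
  have hit : ∀ k, π'^[k] (e i) = e (π^[k] i) := by
    intro k
    induction k with
    | zero => rfl
    | succ k ih => rw [Function.iterate_succ_apply', ih, Function.iterate_succ_apply', (h _).1]
  have hper : Function.minimalPeriod π' (e i) = Function.minimalPeriod π i := by
    apply Function.minimalPeriod_eq_minimalPeriod_iff.2
    intro k
    simp [Function.IsPeriodicPt, Function.IsFixedPt, hit]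
  have hP : ∀ k, partProd π' f' k (e i) * H i = H (π^[k] i) * partProd π f k i := by
    intro k
    induction k with
    | zero => simp [partProd]
    | succ k ih =>
      have := (h (π^[k] i)).2
      rw [partProd, partProd, mul_assoc, ih, Function.iterate_succ_apply', hit, ← mul_assoc, this,
        Function.iterate_succ_apply', mul_assoc]
  unfold cycLabel
  rw [hper]
  refine Prod.ext ?_ rfl
  have h1 := hP (Function.minimalPeriod π i)
  rw [Function.iterate_minimalPeriod] at h1
  refine (ConjClasses.mk_eq_mk_iff_isConj.2 (isConj_iff.2 ⟨H i, ?_⟩)).symm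
  rw [← h1, mul_inv_cancel_right]

/-- Shifting along `π` is an automorphism of the labelled permutation, with the labels
themselves as gauge transformation. -/
theorem cycLabel_apply {ι : Type} (π : Equiv.Perm ι) (f : ι → G) (i : ι) :
    cycLabel π f (π i) = cycLabel π f i :=
  cycLabel_eq π (fun i => f (π i)) (fun _ => ⟨rfl, rfl⟩) i

theorem cycLabel_iterate {ι : Type} (π : Equiv.Perm ι) (f : ι → G) (k : ℕ) (i : ι) :
    cycLabel π f (π^[k] i) = cycLabel π f i := by
  induction k with
  | zero => rfl
  | succ k ih => rw [Function.iterate_succ_apply', cycLabel_apply, ih]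

/-- The number of points lying on a cycle with length `p.2` and product in the class `p.1`. -/
noncomputable def invt {ι : Type} (π : Equiv.Perm ι) (f : ι → G) (p : ConjClasses G × ℕ) : ℕ :=
  Nat.card {i // cycLabel π f i = p}

theorem LabIso.invt_eq {ι ι' : Type} {π : Equiv.Perm ι} {f : ι → G} {π' : Equiv.Perm ι'}
    {f' : ι' → G} (h : LabIso π f π' f') (p : ConjClasses G × ℕ) : invt π f p = invt π' f' p := by
  obtain ⟨e, H, h⟩ := h
  exact Nat.card_congr (e.subtypeEquiv fun i => by rw [cycLabel_eq e H h])

/-! ### Normal forms -/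

/-- The disjoint union of the rotations of `Fin (ℓ q)`. -/
def stdPerm {Q : Type} (ℓ : Q → ℕ) : Equiv.Perm (Σ q, Fin (ℓ q)) :=
  Equiv.sigmaCongrRight fun q => finRotate (ℓ q)

/-- The labelling by `g q` at the point `0` of the cycle `q` and by `1` elsewhere. -/
def stdLab {Q : Type} (ℓ : Q → ℕ) (g : Q → G) : (Σ q, Fin (ℓ q)) → G :=
  fun x => if (x.2 : ℕ) = 0 then g x.1 else 1

theorem val_finRotate {n : ℕ} (j : Fin n) :
    (finRotate n j : ℕ) = if (j : ℕ) + 1 = n then 0 else (j : ℕ) + 1 := by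
  cases n with
  | zero => exact j.elim0
  | succ n =>
    rw [finRotate_apply, Fin.val_add_one]
    simp [Fin.ext_iff]

theorem stdPerm_iterate {Q : Type} (ℓ : Q → ℕ) (q : Q) (k : ℕ) (hk : k < ℓ q) :
    (stdPerm ℓ)^[k] ⟨q, ⟨0, by omega⟩⟩ = ⟨q, ⟨k, hk⟩⟩ := by
  induction k with
  | zero => rfl
  | succ k ih =>
    rw [Function.iterate_succ_apply', ih (by omega)]
    simp only [stdPerm, Equiv.sigmaCongrRight_apply]
    congr 1
    ext
    rw [val_finRotate, if_neg (by simp; omega)]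

theorem stdPerm_iterate_self {Q : Type} (ℓ : Q → ℕ) (q : Q) (h : 0 < ℓ q) :
    (stdPerm ℓ)^[ℓ q] ⟨q, ⟨0, h⟩⟩ = ⟨q, ⟨0, h⟩⟩ := by
  obtain ⟨m, hm⟩ : ∃ m, ℓ q = m + 1 := ⟨ℓ q - 1, by omega⟩
  have := stdPerm_iterate ℓ q m (by omega)
  have h2 : (stdPerm ℓ)^[m + 1] ⟨q, ⟨0, h⟩⟩ = ⟨q, ⟨0, h⟩⟩ := by
    rw [Function.iterate_succ_apply', this]
    simp only [stdPerm, Equiv.sigmaCongrRight_apply]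
    congr 1
    ext
    rw [val_finRotate, if_pos (by simp; omega)]
  rwa [← hm] at h2

theorem minimalPeriod_stdPerm {Q : Type} (ℓ : Q → ℕ) (q : Q) (h : 0 < ℓ q) :
    Function.minimalPeriod (stdPerm ℓ) ⟨q, ⟨0, h⟩⟩ = ℓ q := by
  have hp : Function.IsPeriodicPt (stdPerm ℓ) (ℓ q) ⟨q, ⟨0, h⟩⟩ := stdPerm_iterate_self ℓ q h
  refine le_antisymm (hp.minimalPeriod_le h) ?_
  by_contra! hlt
  have h1 := stdPerm_iterate ℓ q _ hlt
  rw [Function.iterate_minimalPeriod] at h1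
  have h2 := hp.minimalPeriod_pos h
  simp at h1
  omega

theorem partProd_std {Q : Type} (ℓ : Q → ℕ) (g : Q → G) (q : Q) (k : ℕ) (hk : k < ℓ q) :
    partProd (stdPerm ℓ) (stdLab ℓ g) k ⟨q, ⟨0, by omega⟩⟩ = 1 := by
  induction k with
  | zero => rfl
  | succ k ih =>
    rw [partProd, ih (by omega), stdPerm_iterate ℓ q _ hk]
    simp [stdLab]

theorem cycLabel_std {Q : Type} (ℓ : Q → ℕ) (g : Q → G) (x : Σ q, Fin (ℓ q)) :
    cycLabel (stdPerm ℓ) (stdLab ℓ g) x = (ConjClasses.mk (g x.1), ℓ x.1) := by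
  obtain ⟨q, j, hj⟩ := x
  have h : 0 < ℓ q := by omega
  rw [← stdPerm_iterate ℓ q j hj, cycLabel_iterate, cycLabel, minimalPeriod_stdPerm,
    stdPerm_iterate ℓ q j hj]
  have : partProd (stdPerm ℓ) (stdLab ℓ g) (ℓ q) ⟨q, ⟨0, h⟩⟩ = g q := by
    obtain ⟨m, hm⟩ : ∃ m, ℓ q = m + 1 := ⟨ℓ q - 1, by omega⟩
    have h2 : partProd (stdPerm ℓ) (stdLab ℓ g) (m + 1) ⟨q, ⟨0, h⟩⟩ = g q := by
      rw [partProd, partProd_std ℓ g q m (by omega), ← hm, stdPerm_iterate_self]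
      simp [stdLab]
    rwa [← hm] at h2
  rw [this]

/-- A labelled permutation with cycles represented by the points `r q` is isomorphic to the
normal form with the same cycle lengths and cycle products in the same conjugacy classes. -/
theorem labIso_std {ι Q : Type} [Finite ι] (π : Equiv.Perm ι) (f : ι → G) (ℓ : Q → ℕ) (g : Q → G)
    (r : Q → ι) (hr : ∀ i, ∃ q, π.SameCycle (r q) i)
    (hr' : ∀ q q', π.SameCycle (r q) (r q') → q = q')
    (hl : ∀ q, cycLabel π f (r q) = (ConjClasses.mk (g q), ℓ q)) :
    LabIso (stdPerm ℓ) (stdLab ℓ g) π f := by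
  have hper : ∀ q, Function.minimalPeriod π (r q) = ℓ q := fun q => congrArg Prod.snd (hl q)
  have hc : ∀ q, ∃ u : G, u * g q * u⁻¹ = partProd π f (ℓ q) (r q) := by
    intro q
    have h1 := congrArg Prod.fst (hl q)
    simp only [cycLabel, hper] at h1
    exact isConj_iff.1 (ConjClasses.mk_eq_mk_iff_isConj.1 h1.symm)
  choose u hu using hc
  have hit : ∀ (k : ℕ) i, π^[k] i = (π ^ k) i := fun k i => by rw [Equiv.Perm.iterate_eq_pow]
  let F : (Σ q, Fin (ℓ q)) → ι := fun x => π^[(x.2 : ℕ)] (r x.1)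
  have hF : Function.Bijective F := by
    constructor
    · rintro ⟨q, j⟩ ⟨q', j'⟩ h
      simp only [F] at h
      have hq : q = q' := by
        apply hr'
        rw [hit, hit] at h
        have := (Equiv.Perm.SameCycle.refl π (r q)).pow_right (n := (j : ℕ))
        rw [h] at this
        exact Equiv.Perm.sameCycle_pow_right.1 this
      subst hq
      congr 1
      ext
      apply Function.iterate_injOn_Iio_minimalPeriod (f := π) (x := r q) _ _ h
      · simp [hper]
      · simp [hper]
    · intro i
      obtain ⟨q, hq⟩ := hr i
      obtain ⟨k, hk⟩ := hq.exists_nat_pow_eq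
      have hpos : 0 < ℓ q := by
        rw [← hper]
        exact Function.minimalPeriod_pos_of_mem_periodicPts
          (π.injective.mem_periodicPts (r q))
      refine ⟨⟨q, ⟨k % ℓ q, Nat.mod_lt _ hpos⟩⟩, ?_⟩
      simp only [F]
      rw [← hper, Function.iterate_mod_minimalPeriod_eq, hit, hk]
  refine ⟨Equiv.ofBijective F hF, fun x => partProd π f x.2 (r x.1) * u x.1, ?_⟩
  rintro ⟨q, j⟩
  have hv := val_finRotate j
  have hstd : stdPerm ℓ ⟨q, j⟩ = ⟨q, finRotate (ℓ q) j⟩ := rfl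
  rw [hstd]
  simp only [Equiv.ofBijective_apply, F, stdLab]
  rw [← Function.iterate_succ_apply' π]
  by_cases hj : (j : ℕ) + 1 = ℓ q
  · rw [if_pos hj] at hv
    have h1 := hu q
    rw [← hj, partProd] at h1
    have h2 : π^[(j : ℕ) + 1] (r q) = r q := by
      rw [hj, ← hper, Function.iterate_minimalPeriod]
    refine ⟨by rw [hv, Nat.succ_eq_add_one, h2]; rfl, ?_⟩
    rw [if_pos hv, hv, Nat.succ_eq_add_one, ← mul_assoc, ← h1]
    simp [partProd]
  · rw [if_neg hj] at hv
    refine ⟨by rw [hv], ?_⟩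
    rw [hv, if_neg (by omega), partProd]
    simp [mul_assoc]

/-! ### The normal form of a family of partitions -/

/-- One index for each occurrence of a part in one of the multisets `ρ C`. -/
abbrev PartIdx (ρ : ConjClasses G → Multiset ℕ) : Type := Σ C, (ρ C).ToType

/-- The length of the cycle belonging to an occurrence of a part. -/
def pLen (ρ : ConjClasses G → Multiset ℕ) (q : PartIdx ρ) : ℕ := q.2.1

/-- The chosen representative of the conjugacy class to which an occurrence of a part belongs. -/
noncomputable def pElt (ρ : ConjClasses G → Multiset ℕ) (q : PartIdx ρ) : G := Quotient.out q.1

theorem mk_pElt (ρ : ConjClasses G → Multiset ℕ) (q : PartIdx ρ) :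
    ConjClasses.mk (pElt ρ q) = q.1 := Quotient.out_eq q.1

theorem card_std [Finite G] (ρ : ConjClasses G → Multiset ℕ) :
    Nat.card (Σ q, Fin (pLen ρ q)) = ∑ᶠ C, (ρ C).sum := by
  classical
  have := Fintype.ofFinite (ConjClasses G)
  rw [finsum_eq_sum_of_fintype, Nat.card_eq_fintype_card, Fintype.card_sigma, Fintype.sum_sigma]
  refine Finset.sum_congr rfl fun C _ => ?_
  rw [Multiset.sum_eq_sum_coe (ρ C)]
  exact Finset.sum_congr rfl fun y _ => Fintype.card_fin _

theorem invt_stdOf (ρ : ConjClasses G → Multiset ℕ) (C : ConjClasses G) (k : ℕ) :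
    invt (stdPerm (pLen ρ)) (stdLab (pLen ρ) (pElt ρ)) (C, k) = k * (ρ C).count k := by
  have e : {x // cycLabel (stdPerm (pLen ρ)) (stdLab (pLen ρ) (pElt ρ)) x = (C, k)} ≃
      Fin k × Fin ((ρ C).count k) :=
    { toFun := fun x =>
        have h : x.1.1.1 = C ∧ x.1.1.2.1 = k := by
          have := x.2
          rw [cycLabel_std, mk_pElt] at this
          exact Prod.ext_iff.1 this
        (Fin.cast h.2 x.1.2, Fin.cast (congrArg₂ (fun k C => (ρ C).count k) h.2 h.1) x.1.1.2.2)
      invFun := fun y => ⟨⟨⟨C, ⟨k, y.2⟩⟩, y.1⟩, by rw [cycLabel_std, mk_pElt]; rfl⟩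
      left_inv := by
        rintro ⟨⟨⟨C', ⟨k', m⟩⟩, j⟩, h⟩
        have h' := h
        rw [cycLabel_std, mk_pElt] at h'
        obtain ⟨rfl, rfl⟩ := Prod.ext_iff.1 h'
        rfl
      right_inv := fun y => rfl }
  rw [invt, Nat.card_congr e]
  simp

/-- Every labelled permutation is isomorphic to the normal form of some `ρ` with positive
parts. -/
theorem exists_labIso_std {ι : Type} [Finite ι] (π : Equiv.Perm ι) (f : ι → G) :
    ∃ ρ : ConjClasses G → Multiset ℕ, (∀ C, ∀ x ∈ ρ C, 0 < x) ∧
      LabIso (stdPerm (pLen ρ)) (stdLab (pLen ρ) (pElt ρ)) π f := by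
  classical
  let Q := Quotient (Equiv.Perm.SameCycle.setoid π)
  have : Fintype Q := Fintype.ofFinite _
  let r : Q → ι := Quotient.out
  let lab : Q → ConjClasses G × ℕ := fun q => cycLabel π f (r q)
  let ρ : ConjClasses G → Multiset ℕ := fun C =>
    (Finset.univ.filter fun q => (lab q).1 = C).val.map fun q => (lab q).2
  have hcount : ∀ C k, (ρ C).count k = Fintype.card {q // lab q = (C, k)} := by
    intro C k
    rw [Multiset.count_map, Fintype.card_subtype, ← Finset.filter_val, Finset.card_val,
      Finset.filter_filter]
    congr 1
    ext q
    simp [Prod.ext_iff, eq_comm]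
  -- Occurrences of parts correspond to cycles of `π`, compatibly with lengths and classes.
  let s : PartIdx ρ → Q := fun q =>
    ((Fintype.equivFinOfCardEq (hcount q.1 q.2.1).symm).symm q.2.2).1
  have hs : ∀ q, lab (s q) = (q.1, q.2.1) := fun q =>
    ((Fintype.equivFinOfCardEq (hcount q.1 q.2.1).symm).symm q.2.2).2
  have hinj : Function.Injective s := by
    rintro ⟨C, k, m⟩ ⟨C', k', m'⟩ h
    have h1 := (hs ⟨C, k, m⟩).symm.trans ((congrArg lab h).trans (hs ⟨C', k', m'⟩))
    obtain ⟨rfl, rfl⟩ := Prod.ext_iff.1 h1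
    have h2 := Equiv.injective _ (Subtype.ext h)
    simp only at h2
    rw [h2]
  have hsurj : ∀ q, ∃ p, s p = q := by
    intro q
    refine ⟨⟨(lab q).1, ⟨(lab q).2, Fintype.equivFinOfCardEq (hcount _ _).symm ⟨q, rfl⟩⟩⟩, ?_⟩
    simp [s]
  refine ⟨ρ, ?_, labIso_std π f _ _ (fun q => r (s q)) ?_ ?_ ?_⟩
  · intro C x hx
    obtain ⟨q, -, rfl⟩ := Multiset.mem_map.1 hx
    exact Function.minimalPeriod_pos_of_mem_periodicPts (π.injective.mem_periodicPts (r q))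
  · intro i
    obtain ⟨p, hp⟩ := hsurj (Quotient.mk _ i)
    refine ⟨p, ?_⟩
    rw [hp]
    exact Quotient.mk_out (s := Equiv.Perm.SameCycle.setoid π) i
  · intro q q' h
    apply hinj
    exact Quotient.out_equiv_out.1 h
  · intro q
    rw [mk_pElt]
    exact hs q

/-! ### Conjugacy in the wreath product -/

theorem isConj_iff_labIso {n : ℕ} (a b : WreathProduct G n) :
    IsConj a b ↔ LabIso a.right a.left b.right b.left := by
  rw [isConj_iff]
  constructor
  · rintro ⟨c, hc⟩
    rw [mul_inv_eq_iff_eq_mul] at hc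
    have h1 : ∀ i, c.right (a.right i) = b.right (c.right i) := fun i =>
      Equiv.congr_fun (congrArg SemidirectProduct.right hc) i
    refine ⟨c.right, fun i => c.left (c.right i), fun i => ⟨h1 i, ?_⟩⟩
    have h2 := congrFun (congrArg SemidirectProduct.left hc) (b.right (c.right i))
    simp only [SemidirectProduct.mul_left, Pi.mul_apply] at h2
    change c.left _ * a.left (c.right.symm _) = b.left _ * c.left (b.right.symm _) at h2
    rw [Equiv.symm_apply_apply] at h2
    rw [← h2, ← h1, Equiv.symm_apply_apply]
  · rintro ⟨e, H, h⟩
    refine ⟨⟨fun i => H (e.symm i), e⟩, ?_⟩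
    rw [mul_inv_eq_iff_eq_mul]
    ext x
    · simp only [SemidirectProduct.mul_left, Pi.mul_apply]
      change H (e.symm x) * a.left (e.symm x) = b.left x * H (e.symm (b.right.symm x))
      -- The relations in `h` concern the step into `x`, which starts at `b.right⁻¹ x`.
      obtain ⟨h1, h2⟩ := h (e.symm (b.right.symm x))
      rw [Equiv.apply_symm_apply, Equiv.apply_symm_apply] at h1 h2
      have h3 : a.right (e.symm (b.right.symm x)) = e.symm x := (Equiv.symm_apply_eq e).2 h1.symm |>.symm
      rw [h2, h3]
    · exact congrArg Fin.val (h x).1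

/-- A labelled permutation of a type with `n` elements is isomorphic to an element of
`G ≀ Sₙ`. -/
theorem exists_wreath_labIso {ι : Type} [Finite ι] {n : ℕ} (hn : Nat.card ι = n)
    (π : Equiv.Perm ι) (f : ι → G) :
    ∃ a : WreathProduct G n, LabIso π f a.right a.left := by
  let e : ι ≃ Fin n := Finite.equivFinOfCardEq hn
  exact ⟨⟨fun i => f (e.symm i), e.permCongr π⟩, e, fun _ => 1, fun i => by simp⟩

end LabelledPerm

/-- The number of conjugacy classes of `G ≀ Sₙ` equals the number of functions
`ρ` from the conjugacy classes of `G` to partitions (multisets of positive integers) whose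
total size is `n`. -/
theorem card_conjClasses_wreath (G : Type) [Group G] [Fintype G] (n : ℕ) (hn : 0 < n) :
    Nat.card (ConjClasses (WreathProduct G n)) =
      Nat.card {ρ : ConjClasses G → Multiset ℕ //
        (∀ C, ∀ x ∈ ρ C, 0 < x) ∧ ∑ᶠ C, (ρ C).sum = n} := by
  have hex : ∀ ρ : {ρ : ConjClasses G → Multiset ℕ //
      (∀ C, ∀ x ∈ ρ C, 0 < x) ∧ ∑ᶠ C, (ρ C).sum = n}, ∃ a : WreathProduct G n,
      LabIso (stdPerm (pLen ρ.1)) (stdLab (pLen ρ.1) (pElt ρ.1)) a.right a.left := by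
    intro ρ
    have hc := (card_std ρ.1).trans ρ.2.2
    have : Finite (Σ q, Fin (pLen ρ.1 q)) := Nat.finite_of_card_ne_zero (by omega)
    exact exists_wreath_labIso hc _ _
  choose Φ hΦ using hex
  refine (Nat.card_eq_of_bijective (fun ρ => ConjClasses.mk (Φ ρ)) ⟨?_, ?_⟩).symm
  · intro ρ ρ' h
    have h1 := (isConj_iff_labIso _ _).1 (ConjClasses.mk_eq_mk_iff_isConj.1 h)
    have h2 := ((hΦ ρ).trans h1).trans (hΦ ρ').symm
    ext C k
    have h3 := h2.invt_eq (C, k)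
    rw [invt_stdOf, invt_stdOf] at h3
    rcases Nat.eq_zero_or_pos k with rfl | hk
    -- The invariant says nothing about parts `0`, but there are none.
    · rw [Multiset.count_eq_zero_of_notMem fun h0 => (ρ.2.1 C 0 h0).false,
        Multiset.count_eq_zero_of_notMem fun h0 => (ρ'.2.1 C 0 h0).false]
    · exact Nat.eq_of_mul_eq_mul_left hk h3
  · intro c
    obtain ⟨a, rfl⟩ := ConjClasses.exists_rep c
    obtain ⟨ρ, hpos, hiso⟩ := exists_labIso_std a.right a.left
    have hcard : ∑ᶠ C, (ρ C).sum = n := by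
      obtain ⟨e, -⟩ := id hiso
      rw [← card_std, Nat.card_congr e, Nat.card_fin]
    refine ⟨⟨ρ, hpos, hcard⟩, ?_⟩
    apply ConjClasses.mk_eq_mk_iff_isConj.2
    exact (isConj_iff_labIso _ _).2 ((hΦ ⟨ρ, hpos, hcard⟩).symm.trans hiso)
end

section
/- For each triple (ρ,λ,j), where ρ is a type (a function from conjugacy classes of G to partitions with total size n), λ is a positive integer, and C_j is a conjugacy class of G such that λ is a part of ρ(C_j), let c_{(ρ,λ,j)} ∈ ℂ[G≀S_n] be the sum of all elements τ of G≀S_n of type ρ such that the cycle of τ containing n has length λ and the corresponding cycle product lies in C_j. Then the elements c_{(ρ,λ,j)}, as (ρ,λ,j) ranges over all such triples, form a basis of the relative commutant Z(ℂ[G≀S_n], ℂ[H_{n-1,n}]) = {a ∈ ℂ[G≀S_n] : ab = ba for all b ∈ ℂ[H_{n-1,n}]}. -/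
/-- The subgroup `H_{m,n}` of `G ≀ Sₙ` consisting of elements whose permutation part fixes all
1-based points `j` with `m+1 ≤ j ≤ n`, i.e. all 0-based points `j` with `m ≤ j`. -/
noncomputable def Hmn (G : Type*) [Group G] (n m : ℕ) : Subgroup (WreathProduct G n) :=
  Subgroup.comap SemidirectProduct.rightHom
    (⨅ j : {j : Fin n // m ≤ (j : ℕ)}, MulAction.stabilizer (Equiv.Perm (Fin n)) (j : Fin n))

/-- The group algebra of a subgroup `H ≤ K`, as a subalgebra of `ℂ[K]`. -/
noncomputable def groupSubalgebra (K : Type*) [Group K] (H : Subgroup K) :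
    Subalgebra ℂ (MonoidAlgebra ℂ K) :=
  Algebra.adjoin ℂ (Set.range fun h : H => MonoidAlgebra.of ℂ K (h : K))

noncomputable instance instFintypeWreath (G : Type*) [Group G] (n : ℕ) [Fintype G]
    (φ : Equiv.Perm (Fin n) →* MulAut (Fin n → G)) :
    Fintype (SemidirectProduct (Fin n → G) (Equiv.Perm (Fin n)) φ) :=
  Fintype.ofEquiv ((Fin n → G) × Equiv.Perm (Fin n))
    { toFun := fun p => ⟨p.1, p.2⟩
      invFun := fun x => (x.left, x.right)
      left_inv := fun _ => rfl
      right_inv := fun _ => rfl }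

/- The element `c_{(ρ,λ,C)}`: the sum of all elements `τ` of `G≀Sₙ` of type `ρ` such that the
cycle of `τ` containing the distinguished point `i₀` has length `l` and the corresponding
cycle product lies in the conjugacy class `C`. -/
open Classical in
noncomputable def cElt (G : Type*) [Group G] [Fintype G] {n : ℕ} (i₀ : Fin n)
    (ρ : ConjClasses G → Multiset ℕ) (l : ℕ) (C : ConjClasses G) :
    MonoidAlgebra ℂ (WreathProduct G n) :=
  ∑ τ : WreathProduct G n,
    if wrType τ = ρ ∧ Function.minimalPeriod (⇑τ.right) i₀ = l ∧
        ConjClasses.mk (cycleProd τ i₀) = C then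
      MonoidAlgebra.of ℂ (WreathProduct G n) τ
    else 0

/-- Index set of admissible triples `(ρ, λ, C)`: `ρ` is a type of total size `n` (a function
from conjugacy classes of `G` to partitions, all parts positive), and `λ` is a part of
`ρ(C)`. -/
def TypeTriples (G : Type*) [Group G] (n : ℕ) : Type _ :=
  {p : (ConjClasses G → Multiset ℕ) × ℕ × ConjClasses G //
    (∀ C, ∀ x ∈ p.1 C, 0 < x) ∧ (∑ᶠ C, (p.1 C).sum = n) ∧ p.2.1 ∈ p.1 p.2.2}

namespace WreathComm

open Function

/-! ### The action on `G × Fin n` -/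

section Act

variable {G : Type*} [Group G] {n : ℕ}

/-- The action of `G ≀ Sₙ` on `G × Fin n`, `(g, π) • (x, j) = (g_{π j} x, π j)`. It commutes with
right multiplication on the first coordinate, and `G ≀ Sₙ` is the group of all permutations
with this property. -/
def act : WreathProduct G n →* Equiv.Perm (G × Fin n) :=
  MonoidHom.toHomPerm
    { toFun := fun u p => (u.left (u.right p.2) * p.1, u.right p.2)
      map_one' := by
        funext p
        change _ = p
        simp
      map_mul' := by
        intro u v
        funext p
        change _ = (u.left (u.right (v.right p.2)) * (v.left (v.right p.2) * p.1),
          u.right (v.right p.2))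
        simp [wreathHom, mul_assoc] }

lemma act_apply (u : WreathProduct G n) (p : G × Fin n) :
    act u p = (u.left (u.right p.2) * p.1, u.right p.2) := rfl

/-- The action commutes with right multiplication on the first coordinate. -/
lemma act_right (u : WreathProduct G n) (p : G × Fin n) (x : G) :
    act u (p.1 * x, p.2) = ((act u p).1 * x, (act u p).2) := by
  simp [act_apply, mul_assoc]

/-- An element of `G ≀ Sₙ` is determined by its action on the points `(1, j)`. -/
lemma act_ext {u v : WreathProduct G n} (h : ∀ j, act u (1, j) = act v (1, j)) : u = v := by
  have hr : u.right = v.right := by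
    ext j
    have := h j
    simp only [act_apply, Prod.mk.injEq] at this
    rw [this.2]
  refine SemidirectProduct.ext ?_ hr
  funext i
  have := h (u.right⁻¹ i)
  simp only [act_apply, Prod.mk.injEq, mul_one] at this
  rw [← hr] at this
  simpa using this.1

/-- The elements `u` and `v` act in the same way on the fibre over `j` once they agree at one
point of it. -/
lemma act_fibre {u v : WreathProduct G n} {x : G} {j : Fin n} (h : act u (x, j) = act v (x, j))
    (y : G) : act u (y, j) = act v (y, j) := by
  have h1 := act_right u (x, j) (x⁻¹ * y)
  have h2 := act_right v (x, j) (x⁻¹ * y)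
  simp only [mul_inv_cancel_left] at h1 h2
  rw [h1, h2, h]

lemma right_zpow (h : WreathProduct G n) (k : ℤ) : (h ^ k).right = h.right ^ k :=
  map_zpow SemidirectProduct.rightHom h k

lemma right_pow (h : WreathProduct G n) (k : ℕ) : (h ^ k).right = h.right ^ k :=
  map_pow SemidirectProduct.rightHom h k

/-- `H_{n-1,n}` is the stabilizer of the last point, with no condition on the `G`-coordinates. -/
lemma mem_Hmn {i₀ : Fin n} (hi₀ : (i₀ : ℕ) = n - 1) (u : WreathProduct G n) :
    u ∈ Hmn G n (n - 1) ↔ u.right i₀ = i₀ := by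
  simp only [Hmn, Subgroup.mem_comap, Subgroup.mem_iInf, MulAction.mem_stabilizer_iff,
    SemidirectProduct.rightHom_eq_right, Equiv.Perm.smul_def]
  constructor
  · intro h
    exact h ⟨i₀, hi₀.ge⟩
  · rintro h ⟨j, hj⟩
    have hj' : j = i₀ := by
      apply Fin.ext
      have := j.2
      omega
    simpa only [hj'] using h

end Act

/-! ### Cycle length and cycle product of a point -/

section Colour

variable {G : Type*} [Group G] {n : ℕ}

/-- The colour of `i` under `h`: the length of the cycle through `i` and the conjugacy class of
its cycle product. -/
noncomputable def colour (h : WreathProduct G n) (i : Fin n) : ℕ × ConjClasses G :=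
  (minimalPeriod h.right i, ConjClasses.mk (cycleProd h i))

lemma iterate_eq (π : Equiv.Perm (Fin n)) (k : ℕ) : (⇑π)^[k] = ⇑(π ^ k) :=
  (Equiv.Perm.coe_pow π k).symm

lemma period_pos (π : Equiv.Perm (Fin n)) (i : Fin n) : 0 < minimalPeriod π i := by
  refine minimalPeriod_pos_of_mem_periodicPts ?_
  exact Function.Injective.mem_periodicPts π.injective i

lemma pow_period (π : Equiv.Perm (Fin n)) (i : Fin n) : (π ^ minimalPeriod π i) i = i := by
  rw [← iterate_eq]
  exact isPeriodicPt_minimalPeriod π i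

lemma zpow_eq_self_iff (π : Equiv.Perm (Fin n)) (i : Fin n) (k : ℤ) :
    (π ^ k) i = i ↔ (minimalPeriod π i : ℤ) ∣ k :=
  MulAction.zpow_smul_eq_iff_minimalPeriod_dvd (a := π) (b := i)

/-- The coordinates of `h ^ k` along a cycle are partial cycle products, up to moving the first
factor `h.left i` from one end of the product to the other. -/
lemma pow_left_mul (h : WreathProduct G n) (i : Fin n) (k : ℕ) :
    (h ^ k).left ((h.right ^ k) i) * h.left i =
      h.left ((h.right ^ k) i) *
        (((List.range k).map fun j => h.left ((h.right ^ j) i)).reverse).prod := by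
  induction k with
  | zero => simp
  | succ k ih =>
    rw [List.range_succ, List.map_append, List.reverse_append, pow_succ' h,
      pow_succ' h.right, SemidirectProduct.mul_left]
    simp only [List.map_cons, List.map_nil, List.reverse_singleton, List.singleton_append,
      List.prod_cons, Pi.mul_apply, Equiv.Perm.mul_apply]
    rw [← ih, mul_assoc]
    simp [wreathHom]

/-- If `k` is the length of the cycle of `h` through `i`, then the cycle product at `i` is
conjugate to the `i`-th coordinate of `h ^ k`. -/
lemma mk_cycleProd (h : WreathProduct G n) (i : Fin n) :
    ConjClasses.mk (cycleProd h i) =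
      ConjClasses.mk ((h ^ minimalPeriod h.right i).left i) := by
  rw [ConjClasses.mk_eq_mk_iff_isConj, isConj_iff]
  refine ⟨h.left i, ?_⟩
  have := pow_left_mul h i (minimalPeriod h.right i)
  rw [pow_period] at this
  rw [cycleProd, ← this, mul_inv_cancel_right]

/-- Conjugation by `u` carries the colour of `i` to the colour of its image. -/
lemma colour_conj (u h : WreathProduct G n) (i : Fin n) :
    colour (u * h * u⁻¹) (u.right i) = colour h i := by
  have hp : minimalPeriod (u * h * u⁻¹).right (u.right i) = minimalPeriod h.right i := by
    rw [minimalPeriod_eq_minimalPeriod_iff]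
    intro k
    rw [IsPeriodicPt, IsPeriodicPt, IsFixedPt, IsFixedPt, iterate_eq, iterate_eq, ← right_pow,
      conj_pow]
    simp [right_pow]
  unfold colour
  rw [Prod.mk.injEq]
  refine ⟨hp, ?_⟩
  rw [mk_cycleProd, mk_cycleProd, hp, conj_pow, ConjClasses.mk_eq_mk_iff_isConj, isConj_comm,
    isConj_iff]
  refine ⟨u.left (u.right i), ?_⟩
  have := pow_period h.right i
  rw [← right_pow] at this
  have h2 : (h ^ minimalPeriod h.right i).right.symm i = i := by
    rw [Equiv.symm_apply_eq, this]
  simp [wreathHom, h2, mul_assoc]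
  rfl

lemma colour_apply (h : WreathProduct G n) (i : Fin n) : colour h (h.right i) = colour h i := by
  simpa using colour_conj h h i

lemma colour_pow (h : WreathProduct G n) (k : ℕ) (i : Fin n) :
    colour h ((h.right ^ k) i) = colour h i := by
  induction k with
  | zero => simp
  | succ k ih => rw [pow_succ', Equiv.Perm.mul_apply, colour_apply, ih]

end Colour

/-! ### Least elements of cycles -/

section CycleMin

variable {n : ℕ}

open Classical in
/-- The least element of the cycle of `π` through `i`. -/
noncomputable def cmin (π : Equiv.Perm (Fin n)) (i : Fin n) : Fin n :=
  (Finset.univ.filter fun j => π.SameCycle i j).min'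
    ⟨i, by simp [Equiv.Perm.SameCycle.refl]⟩

lemma sameCycle_cmin (π : Equiv.Perm (Fin n)) (i : Fin n) : π.SameCycle i (cmin π i) := by
  classical
  have := Finset.min'_mem (Finset.univ.filter fun j => π.SameCycle i j)
    ⟨i, by simp [Equiv.Perm.SameCycle.refl]⟩
  simp only [Finset.mem_filter, Finset.mem_univ, true_and] at this
  exact this

lemma cmin_le (π : Equiv.Perm (Fin n)) {i j : Fin n} (h : π.SameCycle i j) : cmin π i ≤ j := by
  classical
  exact Finset.min'_le _ _ (by simpa using h)

lemma cmin_congr (π : Equiv.Perm (Fin n)) {i j : Fin n} (h : π.SameCycle i j) :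
    cmin π i = cmin π j :=
  le_antisymm (cmin_le π (h.trans (sameCycle_cmin π j)))
    (cmin_le π (h.symm.trans (sameCycle_cmin π i)))

lemma cmin_cmin (π : Equiv.Perm (Fin n)) (i : Fin n) : cmin π (cmin π i) = cmin π i :=
  (cmin_congr π (sameCycle_cmin π i)).symm

/-- The left side is the condition by which `wrType` picks one point of each cycle. -/
lemma cmin_eq_self_iff (π : Equiv.Perm (Fin n)) (i : Fin n) :
    (∀ k : ℕ, i ≤ (π ^ k) i) ↔ cmin π i = i := by
  constructor
  · intro h
    refine le_antisymm (cmin_le π (Equiv.Perm.SameCycle.refl _ _)) ?_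
    obtain ⟨k, hk⟩ := (sameCycle_cmin π i).exists_nat_pow_eq
    rw [← hk]
    exact h k
  · intro h k
    conv_lhs => rw [← h]
    exact cmin_le π ⟨k, by simp⟩

lemma cmin_eq_iff (π : Equiv.Perm (Fin n)) {b : Fin n} (hb : cmin π b = b) (i : Fin n) :
    cmin π i = b ↔ π.SameCycle b i := by
  constructor
  · rintro rfl
    exact (sameCycle_cmin π i).symm
  · intro h
    rw [← cmin_congr π h, hb]

open Classical in
/-- The cycle through `b` has as many elements as the period of `b`. -/
lemma card_cycle (π : Equiv.Perm (Fin n)) (b : Fin n) :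
    (Finset.univ.filter fun i => π.SameCycle b i).card = minimalPeriod π b := by
  have : (Finset.univ.filter fun i => π.SameCycle b i) =
      (Finset.range (minimalPeriod π b)).image fun k => (⇑π)^[k] b := by
    ext i
    simp only [Finset.mem_filter, Finset.mem_univ, true_and, Finset.mem_image, Finset.mem_range]
    constructor
    · intro h
      obtain ⟨k, rfl⟩ := h.exists_nat_pow_eq
      refine ⟨k % minimalPeriod π b, Nat.mod_lt _ (period_pos π b), ?_⟩
      rw [iterate_mod_minimalPeriod_eq, iterate_eq]
    · rintro ⟨k, -, rfl⟩
      exact ⟨k, by simp [iterate_eq]⟩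
  rw [this, Finset.card_image_of_injOn, Finset.card_range]
  intro a ha b hb hab
  exact iterate_injOn_Iio_minimalPeriod (by simpa using ha) (by simpa using hb) hab

end CycleMin

/-! ### Types as counts of coloured points -/

section TypeCount

variable {G : Type*} [Group G] {n : ℕ}

open Classical in
/-- The multiplicity of a part counts the cycles of a given colour by their least elements. -/
lemma count_wrType (h : WreathProduct G n) (l : ℕ) (C : ConjClasses G) :
    (wrType h C).count l =
      (Finset.univ.filter fun i : Fin n => cmin h.right i = i ∧ colour h i = (l, C)).card := by
  rw [wrType, Multiset.count_map, ← Finset.filter_val, Finset.card_val, Finset.filter_filter]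
  congr 1
  ext i
  simp only [Finset.mem_filter, Finset.mem_univ, true_and, cmin_eq_self_iff, colour, Prod.mk.injEq]
  tauto

open Classical in
/-- A cycle of length `l` contributes one part to the type and `l` points to the colour class. -/
lemma card_colour (h : WreathProduct G n) (l : ℕ) (C : ConjClasses G) :
    (Finset.univ.filter fun i : Fin n => colour h i = (l, C)).card =
      (wrType h C).count l * l := by
  rw [count_wrType, Finset.card_eq_sum_card_fiberwise (f := cmin h.right)
    (t := Finset.univ.filter fun i : Fin n => cmin h.right i = i ∧ colour h i = (l, C))]
  · rw [Finset.sum_const_nat]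
    intro b hb
    simp only [Finset.mem_filter, Finset.mem_univ, true_and] at hb
    have hl : minimalPeriod h.right b = l := congrArg Prod.fst hb.2
    refine Eq.trans ?_ ((card_cycle h.right b).trans hl)
    rw [Finset.filter_filter]
    congr 1
    ext i
    simp only [Finset.mem_filter, Finset.mem_univ, true_and, cmin_eq_iff _ hb.1]
    constructor
    · exact fun h => h.2
    · intro hi
      refine ⟨?_, hi⟩
      obtain ⟨k, rfl⟩ := hi.exists_nat_pow_eq
      rw [colour_pow, hb.2]
  · intro i hi
    simp only [Finset.coe_filter, Finset.mem_univ, true_and, Set.mem_ofPred_eq] at hi ⊢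
    refine ⟨cmin_cmin _ _, ?_⟩
    obtain ⟨k, hk⟩ := (sameCycle_cmin h.right i).exists_nat_pow_eq
    rw [← hk, colour_pow, hi]

lemma pos_of_mem_wrType (h : WreathProduct G n) {l : ℕ} {C : ConjClasses G}
    (hl : l ∈ wrType h C) : 0 < l := by
  rw [wrType, Multiset.mem_map] at hl
  obtain ⟨i, -, rfl⟩ := hl
  exact period_pos _ _

lemma colour_fst_pos (h : WreathProduct G n) (i : Fin n) : 0 < (colour h i).1 :=
  period_pos _ _

open Classical in
/-- A family of multisets of positive integers is the type of `h` as soon as it gives the right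
number of points of each colour. -/
lemma wrType_eq_of_card (h : WreathProduct G n) (ρ : ConjClasses G → Multiset ℕ)
    (hpos : ∀ C, ∀ x ∈ ρ C, 0 < x)
    (H : ∀ l C, (Finset.univ.filter fun i : Fin n => colour h i = (l, C)).card =
      (ρ C).count l * l) : wrType h = ρ := by
  funext C
  ext l
  rcases Nat.eq_zero_or_pos l with rfl | hl
  · rw [Multiset.count_eq_zero_of_notMem, Multiset.count_eq_zero_of_notMem]
    · exact fun hm => (hpos C 0 hm).ne' rfl
    · exact fun hm => (pos_of_mem_wrType h hm).ne' rfl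
  · exact Nat.eq_of_mul_eq_mul_right hl ((card_colour h l C).symm.trans (H l C))

/-- The type is a conjugacy invariant. -/
lemma wrType_conj (u h : WreathProduct G n) : wrType (u * h * u⁻¹) = wrType h := by
  classical
  refine wrType_eq_of_card _ _ (fun C x hx => pos_of_mem_wrType h hx) fun l C => ?_
  rw [← card_colour]
  symm
  refine Finset.card_equiv u.right fun i => ?_
  simp [colour_conj]

/-- The length of the cycle through `i` is a part of the type at the class of its cycle
product. -/
lemma mem_wrType (h : WreathProduct G n) (i : Fin n) :
    (colour h i).1 ∈ wrType h (colour h i).2 := by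
  classical
  rw [← Multiset.count_pos]
  refine Nat.pos_of_mul_pos_right (b := (colour h i).1) ?_
  rw [← card_colour, Finset.card_pos]
  exact ⟨i, by simp⟩

/-- Conversely, every part of the type comes from some point. -/
lemma exists_colour (h : WreathProduct G n) {l : ℕ} {C : ConjClasses G} (hl : l ∈ wrType h C) :
    ∃ i, colour h i = (l, C) := by
  rw [wrType, Multiset.mem_map] at hl
  obtain ⟨i, hi, rfl⟩ := hl
  simp only [Finset.mem_val, Finset.mem_filter] at hi
  exact ⟨i, by rw [colour, hi.2.2]⟩

/-- The parts of a type add up to `n`. -/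
lemma sum_wrType [Finite G] (h : WreathProduct G n) : ∑ᶠ C, (wrType h C).sum = n := by
  classical
  have := Fintype.ofFinite (ConjClasses G)
  rw [finsum_eq_sum_of_fintype]
  have h1 : ∀ C, (wrType h C).sum =
      ∑ b ∈ Finset.univ.filter (fun b => cmin h.right b = b),
        if (colour h b).2 = C then minimalPeriod h.right b else 0 := by
    intro C
    rw [← Finset.sum_filter, Finset.filter_filter, wrType]
    simp_rw [cmin_eq_self_iff]
    rfl
  simp_rw [h1]
  rw [Finset.sum_comm]
  simp only [Finset.sum_ite_eq, Finset.mem_univ, if_true]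
  conv_rhs => rw [← Fintype.card_fin n, ← Finset.card_univ]
  rw [Finset.card_eq_sum_card_fiberwise (f := cmin h.right)
    (t := Finset.univ.filter (fun b => cmin h.right b = b))
    (fun i _ => by simp [cmin_cmin])]
  refine Finset.sum_congr rfl fun b hb => ?_
  rw [← card_cycle]
  congr 1
  ext i
  simp only [Finset.mem_filter, Finset.mem_univ, true_and] at hb ⊢
  exact (cmin_eq_iff _ hb i).symm

end TypeCount

/-! ### Construction of conjugating elements -/

section Conjugacy

variable {G : Type*} [Group G] {n : ℕ}

/-- If `b` and `b'` have the same colour under `h` and `h'`, some element `w` carries the fibre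
over `b` to the fibre over `b'` compatibly with the return maps `h ^ l` and `h' ^ l`. -/
lemma exists_local (h h' : WreathProduct G n) {b b' : Fin n} (hc : colour h b = colour h' b') :
    ∃ w : WreathProduct G n, w.right b = b' ∧
      ∀ x, act (w * h ^ minimalPeriod h.right b) (x, b) =
        act (h' ^ minimalPeriod h.right b * w) (x, b) := by
  have hp : minimalPeriod h.right b = minimalPeriod h'.right b' := congrArg Prod.fst hc
  have hC : ConjClasses.mk (cycleProd h b) = ConjClasses.mk (cycleProd h' b') :=
    congrArg Prod.snd hc
  rw [mk_cycleProd, mk_cycleProd, ConjClasses.mk_eq_mk_iff_isConj, isConj_iff, ← hp] at hC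
  obtain ⟨t, ht⟩ := hC
  refine ⟨⟨fun _ => t, Equiv.swap b b'⟩, by simp, fun x => ?_⟩
  have h1 : (h ^ minimalPeriod h.right b).right b = b := by rw [right_pow, pow_period]
  have h2 : (h' ^ minimalPeriod h.right b).right b' = b' := by rw [right_pow, hp, pow_period]
  rw [map_mul, map_mul, Equiv.Perm.mul_apply, Equiv.Perm.mul_apply, act_apply (h ^ _),
    act_apply _ (x, b), act_apply, act_apply]
  simp only [h1, Equiv.swap_apply_left, h2, ← ht]
  simp [mul_assoc]

/-- Compatibility with the return map propagates to all powers of `h` returning to `b`. -/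
lemma local_zpow (h h' w : WreathProduct G n) {b : Fin n}
    (hw : ∀ x, act (w * h ^ minimalPeriod h.right b) (x, b) =
      act (h' ^ minimalPeriod h.right b * w) (x, b))
    (k : ℤ) (hk : (h.right ^ k) b = b) (x : G) :
    act (w * h ^ k) (x, b) = act (h' ^ k * w) (x, b) := by
  rw [zpow_eq_self_iff] at hk
  obtain ⟨q, rfl⟩ := hk
  set z := h ^ minimalPeriod h.right b with hz
  set z' := h' ^ minimalPeriod h.right b with hz'
  rw [zpow_mul, zpow_mul, zpow_natCast, zpow_natCast, ← hz, ← hz']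
  have hzb : ∀ y, ∃ y', act z (y, b) = (y', b) := by
    intro y
    refine ⟨z.left (z.right b) * y, ?_⟩
    rw [act_apply]
    simp only [hz, right_pow, pow_period]
  have hzb' : ∀ y, ∃ y', act z⁻¹ (y, b) = (y', b) := by
    intro y
    obtain ⟨y', hy'⟩ := hzb 1
    refine ⟨y'⁻¹ * y, ?_⟩
    rw [map_inv, Equiv.Perm.inv_eq_iff_eq]
    have := act_right z (1, b) (y'⁻¹ * y)
    rw [hy'] at this
    simpa using this.symm
  have hneg : ∀ y, act (w * z⁻¹) (y, b) = act (z'⁻¹ * w) (y, b) := by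
    intro y
    obtain ⟨y', hy'⟩ := hzb' y
    have h3 := hw y'
    rw [map_mul, map_mul, Equiv.Perm.mul_apply, Equiv.Perm.mul_apply] at h3
    rw [map_mul, map_mul, Equiv.Perm.mul_apply, Equiv.Perm.mul_apply, hy', map_inv,
      Equiv.Perm.eq_inv_iff_eq, ← h3, ← hy']
    simp
  induction q using Int.induction_on generalizing x with
  | zero => simp
  | succ q ih =>
    obtain ⟨y, hy⟩ := hzb x
    have h3 := hw x
    have h4 := ih y
    simp only [map_mul, Equiv.Perm.mul_apply, zpow_add, zpow_one] at h3 h4 ⊢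
    rw [← h3, hy, h4]
  | pred q ih =>
    obtain ⟨y, hy⟩ := hzb' x
    have h3 := hneg x
    have h4 := ih y
    simp only [map_mul, Equiv.Perm.mul_apply, zpow_sub, zpow_one] at h3 h4 ⊢
    rw [← h3, hy, h4]

/-- Elements with the same type and the same colour at `i₀` are conjugate by an element
fixing `i₀`. -/
lemma exists_conj (h h' : WreathProduct G n) (i₀ : Fin n) (ht : wrType h = wrType h')
    (hc : colour h i₀ = colour h' i₀) :
    ∃ u : WreathProduct G n, u.right i₀ = i₀ ∧ u * h = h' * u := by
  classical
  -- a colour-preserving bijection between the cycles, each represented by its least element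
  have hcard : ∀ c : ℕ × ConjClasses G,
      Nonempty ({a : {b // cmin h.right b = b} // colour h a = c} ≃
        {a : {b // cmin h'.right b = b} // colour h' a = c}) := by
    rintro ⟨l, C⟩
    rw [← Fintype.card_eq]
    have e1 := count_wrType h l C
    have e2 := count_wrType h' l C
    rw [ht, e2] at e1
    rw [Fintype.card_congr (Equiv.subtypeSubtypeEquivSubtypeInter (fun b => cmin h.right b = b)
        (fun b => colour h b = (l, C))),
      Fintype.card_congr (Equiv.subtypeSubtypeEquivSubtypeInter (fun b => cmin h'.right b = b)
        (fun b => colour h' b = (l, C))), Fintype.card_subtype, Fintype.card_subtype]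
    convert e1.symm
  obtain ⟨φ, hφ⟩ : ∃ φ : {b // cmin h.right b = b} ≃ {b // cmin h'.right b = b},
      ∀ b, colour h' (φ b) = colour h b :=
    ⟨Equiv.ofFiberEquiv fun c => (hcard c).some, fun b =>
      Equiv.ofFiberEquiv_map (f := fun b : {b // cmin h.right b = b} => colour h b)
        (g := fun b : {b // cmin h'.right b = b} => colour h' b) _ b⟩
  let β : Fin n → {b // cmin h.right b = b} := fun i => ⟨cmin h.right i, cmin_cmin _ _⟩
  let β' : Fin n → {b // cmin h'.right b = b} := fun i => ⟨cmin h'.right i, cmin_cmin _ _⟩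
  have hcβ : ∀ i, colour h (β i) = colour h i := by
    intro i
    obtain ⟨k, hk⟩ := (sameCycle_cmin h.right i).exists_nat_pow_eq
    change colour h (cmin h.right i) = _
    rw [← hk, colour_pow]
  have hcβ' : ∀ i, colour h' (β' i) = colour h' i := by
    intro i
    obtain ⟨k, hk⟩ := (sameCycle_cmin h'.right i).exists_nat_pow_eq
    change colour h' (cmin h'.right i) = _
    rw [← hk, colour_pow]
  -- the two cycles through `i₀` have the same colour, so they may be matched with each other
  obtain ⟨ψ, hψ, hψ₀⟩ : ∃ ψ : {b // cmin h.right b = b} ≃ {b // cmin h'.right b = b},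
      (∀ b : {b // cmin h.right b = b}, colour h b = colour h' (ψ b)) ∧ ψ (β i₀) = β' i₀ := by
    refine ⟨φ.trans (Equiv.swap (φ (β i₀)) (β' i₀)), fun b => ?_, by simp⟩
    rw [Equiv.trans_apply, Equiv.swap_apply_def]
    split_ifs with h1 h2
    · rw [hcβ', ← hc, ← hcβ i₀, ← hφ (β i₀), ← h1, hφ]
    · rw [hφ, hcβ i₀, hc, ← hcβ' i₀, ← h2, hφ]
    · rw [hφ]
  choose w hw1 hw2 using fun b : {b // cmin h.right b = b} => exists_local h h' (hψ b)
  have hk : ∀ i, ∃ k : ℤ, (h.right ^ k) (β i) = i := fun i => (sameCycle_cmin h.right i).symm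
  choose k hk using hk
  -- `a i` prescribes the action of `u` on the fibre over `i`
  let a : Fin n → WreathProduct G n := fun i => h' ^ k i * w (β i) * h ^ (-k i)
  -- the action of `a i` over `i` is the same for every exponent `m` leading from `β i` to `i`
  have hpt : ∀ (v : WreathProduct G n) (i : Fin n), ∃ y, act v (1, i) = (y, v.right i) :=
    fun v i => ⟨_, rfl⟩
  have ha : ∀ (i : Fin n) (m : ℤ), (h.right ^ m) (β i) = i →
      act (h' ^ m * w (β i) * h ^ (-m)) (1, i) = act (a i) (1, i) := by
    intro i m hm
    obtain ⟨y, hy⟩ := hpt (h ^ (-k i)) i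
    have h0 : (h ^ (-k i)).right i = β i := by
      rw [right_zpow, zpow_neg, Equiv.Perm.inv_eq_iff_eq, hk]
    rw [h0] at hy
    have h1 : (h.right ^ (k i - m)) (β i) = β i := by
      rw [sub_eq_neg_add, zpow_add, Equiv.Perm.mul_apply, hk, zpow_neg,
        Equiv.Perm.inv_eq_iff_eq, hm]
    have h2 := local_zpow h h' (w (β i)) (hw2 (β i)) (k i - m) h1 y
    have h3 : h ^ (-m) = h ^ (k i - m) * h ^ (-k i) := by rw [← zpow_add]; congr 1; ring
    have h4 : h' ^ k i = h' ^ m * h' ^ (k i - m) := by rw [← zpow_add]; congr 1; ring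
    change _ = act (h' ^ k i * w (β i) * h ^ (-k i)) (1, i)
    rw [h3, h4]
    simp only [map_mul, Equiv.Perm.mul_apply] at h2 ⊢
    rw [hy, h2]
  have haσ : ∀ (i : Fin n) (m : ℤ), (h.right ^ m) (β i) = i →
      (a i).right i = (h'.right ^ m) (ψ (β i)) := by
    intro i m hm
    have h1 := congrArg Prod.snd (ha i m hm)
    rw [act_apply, act_apply] at h1
    simp only [SemidirectProduct.mul_right, Equiv.Perm.mul_apply, right_zpow] at h1
    rw [← h1]
    congr 1
    rw [← hw1 (β i)]
    congr 1
    rw [zpow_neg, Equiv.Perm.inv_eq_iff_eq, hm]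
  have hsurj : Surjective fun i => (a i).right i := by
    intro i'
    obtain ⟨m, hm⟩ : ∃ m : ℤ, (h'.right ^ m) (β' i') = i' := (sameCycle_cmin h'.right i').symm
    have hβ : β ((h.right ^ m) (ψ.symm (β' i'))) = ψ.symm (β' i') := by
      apply Subtype.ext
      change cmin _ _ = _
      rw [cmin_eq_iff _ (ψ.symm (β' i')).2]
      exact ⟨m, rfl⟩
    refine ⟨(h.right ^ m) (ψ.symm (β' i')), ?_⟩
    change (a _).right _ = _
    rw [haσ _ m (by rw [hβ]), hβ, Equiv.apply_symm_apply, hm]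
  let σ : Equiv.Perm (Fin n) := Equiv.ofBijective _ (Finite.surjective_iff_bijective.mp hsurj)
  have hσ : ∀ i, σ i = (a i).right i := fun i => rfl
  let u : WreathProduct G n := ⟨fun i' => (a (σ.symm i')).left i', σ⟩
  have hu : ∀ i x, act u (x, i) = act (a i) (x, i) := by
    intro i x
    have h1 : σ.symm ((a i).right i) = i := σ.symm_apply_apply i
    simp only [act_apply, u, hσ, h1]
  have huh : u * h = h' * u := by
    refine act_ext fun j => ?_
    obtain ⟨y, hy⟩ := hpt h j
    have hβ : β (h.right j) = β j := by
      apply Subtype.ext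
      exact (cmin_congr h.right ⟨1, by simp⟩).symm
    have h1 := ha (h.right j) (1 + k j) (by rw [hβ, zpow_add, Equiv.Perm.mul_apply, hk, zpow_one])
    have h2 := act_fibre h1 y
    rw [map_mul, map_mul, Equiv.Perm.mul_apply, Equiv.Perm.mul_apply, hy, hu, hu, ← h2, ← hy,
      ← Equiv.Perm.mul_apply, ← Equiv.Perm.mul_apply, ← map_mul, ← map_mul, hβ]
    congr 2
    change _ = h' * (h' ^ k j * w (β j) * h ^ (-k j))
    rw [zpow_add, zpow_one, neg_add_rev, zpow_add, zpow_neg_one]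
    group
  -- `u` maps the cycle of `i₀` to itself; a power of `h'` corrects it to fix `i₀`
  have hsc : h'.right.SameCycle (u.right i₀) i₀ := by
    change h'.right.SameCycle ((a i₀).right i₀) i₀
    rw [haσ i₀ (k i₀) (hk i₀), hψ₀, Equiv.Perm.sameCycle_zpow_left]
    exact (sameCycle_cmin _ _).symm
  obtain ⟨r, hr⟩ := hsc
  refine ⟨h' ^ r * u, ?_, ?_⟩
  · rw [SemidirectProduct.mul_right, Equiv.Perm.mul_apply, right_zpow, hr]
  · rw [mul_assoc, huh, ← mul_assoc, ← mul_assoc, ← zpow_add_one, ← zpow_one_add, add_comm]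

end Conjugacy

/-! ### Realizing every type -/

section Existence

variable {G : Type*} [Group G] {n : ℕ}

lemma cycleProd_eq_of_forall (h : WreathProduct G n) (i : Fin n)
    (H : ∀ j, 0 < j → j < minimalPeriod h.right i → h.left ((h.right ^ j) i) = 1) :
    cycleProd h i = h.left i := by
  obtain ⟨m, hm⟩ := Nat.exists_eq_succ_of_ne_zero (period_pos h.right i).ne'
  rw [cycleProd, hm, List.range_succ_eq_map, List.map_cons, List.reverse_cons, List.prod_append,
    List.map_map, List.prod_eq_one]
  · simp
  · intro x hx
    simp only [List.mem_reverse, List.mem_map, List.mem_range, comp_apply] at hx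
    obtain ⟨j, hj, rfl⟩ := hx
    exact H _ (Nat.succ_pos j) (by omega)

lemma val_finRotate_pow {l : ℕ} (k : ℕ) (j : Fin l) :
    ((finRotate l ^ k) j : ℕ) = (j + k) % l := by
  induction k with
  | zero => simp [Nat.mod_eq_of_lt j.2]
  | succ k ih =>
    obtain ⟨m, rfl⟩ := Nat.exists_eq_succ_of_ne_zero (Fin.pos j).ne'
    rw [pow_succ', Equiv.Perm.mul_apply, finRotate_apply, Fin.val_add, ih]
    simp [add_assoc]

/-- Every family of partitions of total size `n` is a type: the permutation rotates blocks of the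
prescribed lengths, and one coordinate in each block is a representative of the prescribed
conjugacy class, the others being trivial. -/
lemma exists_wrType_eq [Finite G] (ρ : ConjClasses G → Multiset ℕ)
    (hpos : ∀ C, ∀ x ∈ ρ C, 0 < x) (hsum : ∑ᶠ C, (ρ C).sum = n) :
    ∃ h : WreathProduct G n, wrType h = ρ := by
  classical
  have := Fintype.ofFinite (ConjClasses G)
  rw [finsum_eq_sum_of_fintype] at hsum
  let Ω := Σ C : ConjClasses G, Σ x : ρ C, Fin x.1
  have hΩ : Fintype.card Ω = n := by
    rw [← hsum, Fintype.card_sigma]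
    refine Finset.sum_congr rfl fun C _ => ?_
    rw [Fintype.card_sigma, Multiset.sum_eq_sum_coe]
    simp
  let e : Ω ≃ Fin n := Fintype.equivFinOfCardEq hΩ
  let p : Equiv.Perm Ω :=
    Equiv.sigmaCongrRight fun C => Equiv.sigmaCongrRight fun x : ρ C => finRotate x.1
  let g : Ω → G := fun ω => if (ω.2.2 : ℕ) = 0 then Quotient.out ω.1 else 1
  let h : WreathProduct G n := ⟨fun i => g (e.symm i), e.permCongr p⟩
  have hright : ∀ ω, h.right (e ω) = e (p ω) := fun ω => by simp [h, Equiv.permCongr_apply]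
  have hpow : ∀ (k : ℕ) (C : ConjClasses G) (x : ρ C) (j : Fin x.1),
      (h.right ^ k) (e ⟨C, x, j⟩) = e ⟨C, x, (finRotate x.1 ^ k) j⟩ := by
    intro k C x j
    induction k with
    | zero => simp
    | succ k ih =>
      rw [pow_succ', Equiv.Perm.mul_apply, ih, pow_succ', Equiv.Perm.mul_apply, hright]
      rfl
  have hleft : ∀ ω, h.left (e ω) = g ω := fun ω => by simp [h]
  have hcol : ∀ ω : Ω, colour h (e ω) = (ω.2.1.1, ω.1) := by
    rintro ⟨C, x, j⟩
    have hx : 0 < x.1 := Fin.pos j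
    have hj : (finRotate x.1 ^ (j : ℕ)) ⟨0, hx⟩ = j := by
      apply Fin.ext
      rw [val_finRotate_pow, zero_add, Nat.mod_eq_of_lt j.2]
    have hinj : ∀ j j' : Fin x.1, e ⟨C, x, j⟩ = e ⟨C, x, j'⟩ ↔ j = j' := fun j j' =>
      ⟨fun h => sigma_mk_injective (β := fun x : ρ C => Fin x.1)
        (sigma_mk_injective (β := fun C => Σ x : ρ C, Fin x.1) (e.injective h)), fun h => by rw [h]⟩
    have hper : minimalPeriod h.right (e ⟨C, x, ⟨0, hx⟩⟩) = x.1 := by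
      have key : ∀ k, minimalPeriod h.right (e ⟨C, x, ⟨0, hx⟩⟩) ∣ k ↔ x.1 ∣ k := by
        intro k
        rw [← isPeriodicPt_iff_minimalPeriod_dvd, IsPeriodicPt, IsFixedPt, iterate_eq, hpow,
          hinj]
        simp [Fin.ext_iff, val_finRotate_pow, Nat.dvd_iff_mod_eq_zero]
      exact Nat.dvd_antisymm ((key _).2 dvd_rfl) ((key _).1 dvd_rfl)
    rw [← hj, ← hpow, colour_pow, colour, hper, cycleProd_eq_of_forall, hleft]
    · have h1 : g ⟨C, x, ⟨0, hx⟩⟩ = Quotient.out C := by simp [g]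
      rw [h1]
      exact congrArg (Prod.mk x.1) (Quotient.out_eq C)
    · intro k hk hk'
      rw [hper] at hk'
      rw [hpow, hleft]
      simp [g, val_finRotate_pow, Nat.mod_eq_of_lt hk', hk.ne']
  refine ⟨h, wrType_eq_of_card h ρ hpos fun l C => ?_⟩
  have h1 : (Finset.univ.filter fun i : Fin n => colour h i = (l, C)).card =
      (Finset.univ.filter fun ω : Ω => (ω.2.1.1, ω.1) = (l, C)).card := by
    symm
    refine Finset.card_equiv e fun ω => ?_
    simp [hcol]
  have h2 : ∀ s : Multiset ℕ, (s.map fun a => if a = l then a else 0).sum = s.count l * l := by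
    intro s
    induction s using Multiset.induction_on with
    | empty => simp
    | cons a s ih =>
      rw [Multiset.map_cons, Multiset.sum_cons, ih, Multiset.count_cons]
      by_cases hal : a = l
      · subst hal
        simp [add_mul, add_comm]
      · simp [hal, Ne.symm hal]
  rw [h1, Finset.card_filter, Fintype.sum_sigma, Finset.sum_eq_single C]
  · rw [Fintype.sum_sigma, ← h2]
    conv_rhs => rw [← Multiset.map_univ_coe (ρ C), Multiset.map_map]
    change _ = ∑ x : ρ C, _
    refine Finset.sum_congr rfl fun x _ => ?_
    by_cases hx : x.1 = l <;> simp [hx]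
  · intro D _ hD
    simp [hD]
  · simp

end Existence

/-! ### Coefficients in the group algebra -/

section GroupAlgebra

variable {G : Type} [Group G] [Fintype G] {n : ℕ}

/-- The triple `(type, cycle length at i₀, class of the cycle product at i₀)`. -/
noncomputable def key (i₀ : Fin n) (h : WreathProduct G n) : TypeTriples G n :=
  ⟨(wrType h, colour h i₀), fun _ _ hx => pos_of_mem_wrType h hx, sum_wrType h, mem_wrType h i₀⟩

lemma key_eq_iff (i₀ : Fin n) (h : WreathProduct G n) (p : TypeTriples G n) :
    key i₀ h = p ↔ wrType h = p.1.1 ∧ minimalPeriod (⇑h.right) i₀ = p.1.2.1 ∧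
      ConjClasses.mk (cycleProd h i₀) = p.1.2.2 := by
  refine Subtype.ext_iff.trans (Prod.ext_iff.trans (and_congr Iff.rfl ?_))
  exact Prod.ext_iff

/-- Conjugation by an element whose permutation fixes `i₀` preserves the triple. -/
lemma key_conj {i₀ : Fin n} {u : WreathProduct G n} (hu : u.right i₀ = i₀)
    (h : WreathProduct G n) : key i₀ (u * h * u⁻¹) = key i₀ h := by
  rw [key_eq_iff, ← Prod.mk.injEq]
  have := colour_conj u h i₀
  rw [hu] at this
  exact ⟨wrType_conj u h, this⟩

/-- Every admissible triple is the key of some element, so that no `c_{(ρ,λ,C)}` vanishes. -/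
lemma key_surjective (i₀ : Fin n) : Surjective (key (G := G) i₀) := by
  rintro ⟨⟨ρ, l, C⟩, hpos, hsum, hmem⟩
  obtain ⟨h, rfl⟩ := exists_wrType_eq ρ hpos hsum
  obtain ⟨i, hi⟩ := exists_colour h hmem
  -- relabelling by the transposition of `i` and `i₀` moves the right cycle to `i₀`
  let u : WreathProduct G n := SemidirectProduct.inr (Equiv.swap i i₀)
  have hu : u.right i = i₀ := by simp [u]
  refine ⟨u * h * u⁻¹, ?_⟩
  apply Subtype.ext
  change (_, _) = (_, _)
  rw [wrType_conj]
  have := colour_conj u h i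
  rw [hu] at this
  rw [this, hi]

/-- `c_{(ρ,λ,C)}` is the indicator function of a fibre of `key`. -/
lemma coeff_cElt (i₀ : Fin n) (p : TypeTriples G n) (τ : WreathProduct G n)
    [Decidable (key i₀ τ = p)] :
    (cElt G i₀ p.1.1 p.1.2.1 p.1.2.2).coeff τ = if key i₀ τ = p then 1 else 0 := by
  classical
  simp only [cElt, ← key_eq_iff]
  simp only [MonoidAlgebra.coeff_sum, Finsupp.finsetSum_apply]
  rw [Finset.sum_eq_single τ]
  · split_ifs <;> simp [MonoidAlgebra.of_apply]
  · intro σ _ hσ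
    split_ifs <;> simp [MonoidAlgebra.of_apply, hσ]
  · simp

/-- An element commutes with `ℂ[H]` exactly when its coefficients are invariant under conjugation
by `H`. -/
lemma mem_centralizer_iff {K : Type*} [Group K] (H : Subgroup K) (a : MonoidAlgebra ℂ K) :
    a ∈ Subalgebra.centralizer ℂ ((groupSubalgebra K H : Subalgebra ℂ _) : Set _) ↔
      ∀ u ∈ H, ∀ τ, a.coeff (u * τ * u⁻¹) = a.coeff τ := by
  have hadj : a ∈ Subalgebra.centralizer ℂ ((groupSubalgebra K H : Subalgebra ℂ _) : Set _) ↔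
      ∀ x ∈ Set.range (fun h : H => MonoidAlgebra.of ℂ K (h : K)), x * a = a * x := by
    rw [Subalgebra.mem_centralizer_iff]
    refine ⟨fun h x hx => h x (Algebra.subset_adjoin hx), fun h x hx => ?_⟩
    have hle : groupSubalgebra K H ≤ Subalgebra.centralizer ℂ {a} :=
      Algebra.adjoin_le fun y hy => by
        rw [SetLike.mem_coe, Subalgebra.mem_centralizer_iff]
        rintro _ rfl
        exact (h y hy).symm
    have := hle hx
    rw [Subalgebra.mem_centralizer_iff] at this
    exact (this a rfl).symm
  rw [hadj]
  constructor
  · intro h u hu τ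
    have := congrArg (fun x => x.coeff (u * τ)) (h _ ⟨⟨u, hu⟩, rfl⟩)
    simpa [MonoidAlgebra.of_apply] using this.symm
  · rintro h _ ⟨u, rfl⟩
    ext τ
    have := h u u.2 ((u : K)⁻¹ * τ)
    simpa [MonoidAlgebra.of_apply, mul_assoc] using this.symm

end GroupAlgebra

end WreathComm

/-- The elements `c_{(ρ,λ,j)}` form a basis of the relative commutant
`Z(ℂ[G≀Sₙ], ℂ[H_{n-1,n}])` (the distinguished point is the last one, 1-based `n`). -/
theorem cElt_basis_relative_commutant (G : Type) [Group G] [Fintype G] (n : ℕ) (hn : 0 < n) :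
    LinearIndependent ℂ (fun p : TypeTriples G n =>
        cElt G (⟨n - 1, by omega⟩ : Fin n) p.1.1 p.1.2.1 p.1.2.2) ∧
    Submodule.span ℂ (Set.range fun p : TypeTriples G n =>
        cElt G (⟨n - 1, by omega⟩ : Fin n) p.1.1 p.1.2.1 p.1.2.2) =
      Subalgebra.toSubmodule
        (Subalgebra.centralizer ℂ
          ((groupSubalgebra (WreathProduct G n) (Hmn G n (n - 1)) :
            Subalgebra ℂ (MonoidAlgebra ℂ (WreathProduct G n))) : Set _)) := by
  classical
  set i₀ : Fin n := ⟨n - 1, by omega⟩ with hi₀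
  constructor
  · rw [linearIndependent_iff']
    intro s c hc p hp
    obtain ⟨τ, hτ⟩ := WreathComm.key_surjective i₀ p
    -- at an element with triple `p` only the term of index `p` has a nonzero coefficient
    have := congrArg (fun x => x.coeff τ) hc
    simpa [MonoidAlgebra.coeff_sum, WreathComm.coeff_cElt, hτ, hp] using this
  · apply le_antisymm
    · rw [Submodule.span_le]
      rintro _ ⟨p, rfl⟩
      refine (WreathComm.mem_centralizer_iff _ _).2 fun u hu τ => ?_
      rw [WreathComm.mem_Hmn (i₀ := i₀) rfl] at hu
      rw [WreathComm.coeff_cElt, WreathComm.coeff_cElt, WreathComm.key_conj hu]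
    · intro a ha
      have ha' := (WreathComm.mem_centralizer_iff _ _).1 ha
      -- the coefficients of `a` only depend on the triple of the group element
      have hconst : ∀ τ τ', WreathComm.key i₀ τ = WreathComm.key i₀ τ' →
          a.coeff τ = a.coeff τ' := by
        intro τ τ' h
        have h1 := congrArg Subtype.val h
        obtain ⟨u, hu, huτ⟩ := WreathComm.exists_conj τ τ' i₀ (congrArg Prod.fst h1)
          (congrArg Prod.snd h1)
        rw [← ha' u ((WreathComm.mem_Hmn rfl u).2 hu) τ, huτ, mul_inv_cancel_right]
      have hsum : a = ∑ p ∈ Finset.univ.image (WreathComm.key i₀),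
          a.coeff (Function.surjInv (WreathComm.key_surjective i₀) p) • cElt G i₀ p.1.1 p.1.2.1 p.1.2.2 := by
        ext τ
        simp only [MonoidAlgebra.coeff_sum, Finsupp.finsetSum_apply, MonoidAlgebra.coeff_smul,
          Finsupp.smul_apply, WreathComm.coeff_cElt, smul_eq_mul, mul_ite, mul_one, mul_zero]
        rw [Finset.sum_ite_eq, if_pos (Finset.mem_image_of_mem _ (Finset.mem_univ τ))]
        exact hconst _ _ (Function.surjInv_eq _ _).symm
      rw [hsum]
      exact Submodule.sum_mem _ fun p _ =>
        Submodule.smul_mem _ _ (Submodule.subset_span ⟨p, rfl⟩)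
end

section
/- For 2 ≤ m ≤ n, the relative commutant Z(ℂ[H_{m,n}], ℂ[H_{m-1,n}]) = {a ∈ ℂ[H_{m,n}] : ab = ba for all b ∈ ℂ[H_{m-1,n}]} equals the subalgebra of ℂ[H_{m,n}] generated by the center of ℂ[H_{m-1,n}] together with the Young–Jucys–Murphy element X_m. -/
/-- `g^{(i)}` : the element of `G ≀ Sₙ` with `g` in the `i`-th coordinate. -/
def gAt {G : Type*} [Group G] {n : ℕ} (i : Fin n) (g : G) : WreathProduct G n :=
  SemidirectProduct.inl (Pi.mulSingle i g)

/-- A permutation viewed inside `G ≀ Sₙ`. -/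
def pIn {G : Type*} [Group G] {n : ℕ} (π : Equiv.Perm (Fin n)) : WreathProduct G n :=
  SemidirectProduct.inr π

/-- The Young–Jucys–Murphy element with 0-based index: for `i : Fin n`, `YJM G n i` is the
element `X_{i+1}` (1-based), namely `X_{i+1} = Σ_{k<i} Σ_{g∈G} (g⁻¹)^{(k)} g^{(i)} (k,i)`. -/
noncomputable def YJM (G : Type*) [Group G] [Fintype G] (n : ℕ) (i : Fin n) :
    MonoidAlgebra ℂ (WreathProduct G n) :=
  ∑ k ∈ Finset.univ.filter (fun k : Fin n => k < i), ∑ g : G,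
    MonoidAlgebra.of ℂ (WreathProduct G n)
      (gAt k g⁻¹ * gAt i g * pIn (Equiv.swap k i))

/-- The center of a subalgebra `S` of `A`, as a subset of `A`. -/
def subCenter {A : Type*} [Ring A] [Algebra ℂ A] (S : Subalgebra ℂ A) : Set A :=
  {a | a ∈ S ∧ ∀ b ∈ S, a * b = b * a}

/-! ### Averaging over a subgroup -/

section Averaging

variable {W : Type*} [Group W]

theorem mem_groupSubalgebra {H : Subgroup W} {h : W} (hh : h ∈ H) :
    MonoidAlgebra.of ℂ W h ∈ groupSubalgebra W H :=
  Algebra.subset_adjoin ⟨⟨h, hh⟩, rfl⟩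

theorem groupSubalgebra_mono {H H' : Subgroup W} (hle : H ≤ H') :
    groupSubalgebra W H ≤ groupSubalgebra W H' :=
  Algebra.adjoin_le (by rintro _ ⟨h, rfl⟩; exact mem_groupSubalgebra (hle h.2))

theorem commute_groupSubalgebra {H : Subgroup W} {a : MonoidAlgebra ℂ W}
    (ha : ∀ w ∈ H, MonoidAlgebra.of ℂ W w * a = a * MonoidAlgebra.of ℂ W w) :
    ∀ b ∈ groupSubalgebra W H, b * a = a * b := by
  intro b hb
  have hle : groupSubalgebra W H ≤ Subalgebra.centralizer ℂ {a} := by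
    refine Algebra.adjoin_le ?_
    rintro _ ⟨h, rfl⟩
    rw [SetLike.mem_coe, Subalgebra.mem_centralizer_iff]
    rintro _ rfl
    exact (ha h h.2).symm
  exact ((Subalgebra.mem_centralizer_iff ℂ).1 (hle hb) a rfl).symm

theorem mem_span_of_mem_groupSubalgebra {H : Subgroup W} {a : MonoidAlgebra ℂ W}
    (ha : a ∈ groupSubalgebra W H) :
    a ∈ Submodule.span ℂ (Set.range fun h : H => MonoidAlgebra.of ℂ W (h : W)) := by
  have h1 : (Set.range fun h : H => MonoidAlgebra.of ℂ W (h : W)) =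
      (MonoidHom.mrange ((MonoidAlgebra.of ℂ W).comp H.subtype) : Set _) := rfl
  rw [groupSubalgebra, ← Subalgebra.mem_toSubmodule, Algebra.adjoin_eq_span, h1,
    Submonoid.closure_eq] at ha
  exact ha

variable [Finite W]

open Classical in
/-- The unnormalised average `x ↦ ∑_{w ∈ H} w x w⁻¹` over the subgroup `H`. -/
noncomputable def avg (H : Subgroup W) : MonoidAlgebra ℂ W →ₗ[ℂ] MonoidAlgebra ℂ W :=
  letI := Fintype.ofFinite H
  ∑ w : H, LinearMap.mulLeft ℂ (MonoidAlgebra.of ℂ W (w : W)) ∘ₗ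
    LinearMap.mulRight ℂ (MonoidAlgebra.of ℂ W (w : W)⁻¹)

theorem avg_apply (H : Subgroup W) [Fintype H] (x : MonoidAlgebra ℂ W) :
    avg H x = ∑ w : H, MonoidAlgebra.of ℂ W (w : W) * (x * MonoidAlgebra.of ℂ W (w : W)⁻¹) := by
  rw [avg, LinearMap.sum_apply]
  refine Finset.sum_congr (by ext; simp) fun w _ => rfl

theorem avg_eq_of_commute (H : Subgroup W) [Fintype H] {x : MonoidAlgebra ℂ W}
    (hx : ∀ w ∈ H, MonoidAlgebra.of ℂ W w * x = x * MonoidAlgebra.of ℂ W w) :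
    avg H x = (Fintype.card H : ℂ) • x := by
  rw [avg_apply, Finset.sum_congr rfl (g := fun _ => x)]
  · simp [Nat.cast_smul_eq_nsmul]
  · intro w _
    rw [← mul_assoc, hx w w.2, mul_assoc, ← map_mul, mul_inv_cancel, map_one,
      mul_one]

theorem avg_mul_of_commute (H : Subgroup W) {x : MonoidAlgebra ℂ W}
    (hx : ∀ w ∈ H, MonoidAlgebra.of ℂ W w * x = x * MonoidAlgebra.of ℂ W w)
    (y : MonoidAlgebra ℂ W) : avg H (x * y) = x * avg H y := by
  let _ := Fintype.ofFinite H
  rw [avg_apply, avg_apply, Finset.mul_sum]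
  refine Finset.sum_congr rfl fun w _ => ?_
  rw [mul_assoc x y, ← mul_assoc _ x, hx w w.2, mul_assoc]

theorem of_mul_avg (H : Subgroup W) {v : W} (hv : v ∈ H) (x : MonoidAlgebra ℂ W) :
    MonoidAlgebra.of ℂ W v * avg H x = avg H x * MonoidAlgebra.of ℂ W v := by
  let _ := Fintype.ofFinite H
  rw [avg_apply, Finset.mul_sum, Finset.sum_mul]
  refine Fintype.sum_equiv (Equiv.mulLeft (⟨v, hv⟩ : H)) _ _ fun w => ?_
  simp only [Equiv.coe_mulLeft, Subgroup.coe_mul, mul_inv_rev, map_mul, mul_assoc]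
  rw [← map_mul _ v⁻¹ v]
  simp

theorem avg_conj (H : Subgroup W) {v : W} (hv : v ∈ H) (a : W) :
    avg H (MonoidAlgebra.of ℂ W (v * a * v⁻¹)) = avg H (MonoidAlgebra.of ℂ W a) := by
  let _ := Fintype.ofFinite H
  rw [avg_apply, avg_apply]
  refine Fintype.sum_equiv (Equiv.mulRight (⟨v, hv⟩ : H)) _ _ fun w => ?_
  simp only [Equiv.coe_mulRight, Subgroup.coe_mul, ← map_mul]
  congr 1
  group

theorem avg_mem_subCenter (H : Subgroup W) {h : W} (hh : h ∈ H) :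
    avg H (MonoidAlgebra.of ℂ W h) ∈ subCenter (groupSubalgebra W H) := by
  refine ⟨?_, fun b hb => (commute_groupSubalgebra (fun w hw => of_mul_avg H hw _) b hb).symm⟩
  let _ := Fintype.ofFinite H
  rw [avg_apply]
  exact sum_mem fun w _ => mul_mem (mem_groupSubalgebra w.2)
    (mul_mem (mem_groupSubalgebra hh) (mem_groupSubalgebra (H.inv_mem w.2)))

end Averaging

/-! ### The summands of the Young–Jucys–Murphy element -/

section Wreath

variable {G : Type*} [Group G] {n : ℕ}

theorem wreathHom_apply (π : Equiv.Perm (Fin n)) (f : Fin n → G) (i : Fin n) :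
    wreathHom G n π f i = f (π⁻¹ i) := rfl

theorem mem_Hmn {m : ℕ} {w : WreathProduct G n} :
    w ∈ Hmn G n m ↔ ∀ j : Fin n, m ≤ (j : ℕ) → w.right j = j := by
  simp [Hmn, Subgroup.mem_comap, Subgroup.mem_iInf, MulAction.mem_stabilizer_iff]

/-- The element `(g⁻¹)^{(k)} g^{(M)} (k,M)`. -/
def jmTerm (M k : Fin n) (g : G) : WreathProduct G n :=
  gAt k g⁻¹ * gAt M g * pIn (Equiv.swap k M)

@[simp] theorem jmTerm_right (M k : Fin n) (g : G) :
    (jmTerm M k g).right = Equiv.swap k M := by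
  simp [jmTerm, gAt, pIn]

@[simp] theorem jmTerm_left (M k : Fin n) (g : G) :
    (jmTerm M k g).left = Pi.mulSingle k g⁻¹ * Pi.mulSingle M g := by
  simp [jmTerm, gAt, pIn]

theorem jmTerm_mem {m : ℕ} {M k : Fin n} (hM : (M : ℕ) < m) (hk : (k : ℕ) < m) (g : G) :
    jmTerm M k g ∈ Hmn G n m := by
  rw [mem_Hmn]
  intro j hj
  rw [jmTerm_right, Equiv.swap_apply_of_ne_of_ne] <;> (rintro rfl; omega)

theorem jmTerm_mul_self {M k : Fin n} (hk : k ≠ M) (g : G) :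
    jmTerm M k g * jmTerm M k g = 1 := by
  ext i
  · rcases eq_or_ne i k with rfl | h1
    · simp [wreathHom_apply, hk, hk.symm]
    · rcases eq_or_ne i M with rfl | h2
      · simp [wreathHom_apply, hk, hk.symm]
      · simp [wreathHom_apply, h1, h2, Equiv.swap_apply_of_ne_of_ne]
  · simp

/-- Conjugation by an element fixing the point `M` permutes the elements `jmTerm M k g`. -/
theorem conj_jmTerm {M k : Fin n} (hk : k ≠ M) (g : G) {w : WreathProduct G n}
    (hw : w.right M = M) :
    w * jmTerm M k g =
      jmTerm M (w.right k) (w.left M * g * (w.left (w.right k))⁻¹) * w := by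
  have hw' : w.right⁻¹ M = M := by rw [Equiv.Perm.inv_eq_iff_eq, hw]
  have hk' : w.right k ≠ M := fun h => hk (w.right.injective (h.trans hw.symm))
  ext i
  · rcases eq_or_ne i (w.right k) with rfl | h1
    · simp [wreathHom_apply, hk, hk', mul_assoc]
    · rcases eq_or_ne i M with rfl | h2
      · simp [wreathHom_apply, hw', hk.symm, hk'.symm]
      · have h3 : w.right⁻¹ i ≠ k := fun h => h1 (Equiv.Perm.inv_eq_iff_eq.1 h)
        have h4 : w.right⁻¹ i ≠ M := fun h => h2 ((Equiv.Perm.inv_eq_iff_eq.1 h).trans hw)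
        rw [Equiv.Perm.inv_def] at h3 h4
        simp [wreathHom_apply, h1, h2, h3, h4, Equiv.swap_apply_of_ne_of_ne h1 h2]
  · have := Equiv.mul_swap_eq_swap_mul w.right k M
    rw [hw] at this
    simp [SemidirectProduct.mul_right, this]

/-- The point `j` is fixed by `h` with trivial colour. -/
def TrivAt (h : WreathProduct G n) (j : Fin n) : Prop := h.right j = j ∧ h.left j = 1

theorem TrivAt.jmTerm_mul {h : WreathProduct G n} {M k j : Fin n} (hj : TrivAt h j)
    (hjk : j ≠ k) (hjM : j ≠ M) (g : G) : TrivAt (jmTerm M k g * h) j := by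
  constructor
  · simp [hj.1, Equiv.swap_apply_of_ne_of_ne hjk hjM]
  · simp [wreathHom_apply, hj.2, hjk, hjM, Equiv.swap_apply_of_ne_of_ne hjk hjM]

theorem trivAt_jmTerm_mul {h : WreathProduct G n} {M k : Fin n} (hkM : k ≠ M)
    (hk : h.right k = M) : TrivAt (jmTerm M k (h.left M) * h) k := by
  constructor
  · simp [hk]
  · simp [wreathHom_apply, hkM]

/-- An element exchanging `k` and `k'` commutes with every `h` trivial at both points. -/
theorem commute_swap {h : WreathProduct G n} {k k' : Fin n} (hk : TrivAt h k) (hk' : TrivAt h k')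
    (x : G) : (gAt k' x * pIn (Equiv.swap k k')) * h = h * (gAt k' x * pIn (Equiv.swap k k')) := by
  have e1 : h.right⁻¹ k = k := by rw [Equiv.Perm.inv_eq_iff_eq, hk.1]
  have e2 : h.right⁻¹ k' = k' := by rw [Equiv.Perm.inv_eq_iff_eq, hk'.1]
  ext i
  · rcases eq_or_ne i k' with rfl | h1
    · simp [gAt, pIn, wreathHom_apply, e2, hk.2, hk'.2]
    · have h3 : h.right⁻¹ i ≠ k' := fun h' =>
        h1 ((Equiv.Perm.inv_eq_iff_eq.1 h').trans hk'.1)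
      rcases eq_or_ne i k with rfl | h2
      · simp [gAt, pIn, wreathHom_apply, e1, h1, hk.2, hk'.2]
      · rw [Equiv.Perm.inv_def] at h3
        simp [gAt, pIn, wreathHom_apply, h1, h3, Equiv.swap_apply_of_ne_of_ne h2 h1]
  · have := Equiv.mul_swap_eq_swap_mul h.right k k'
    rw [hk.1, hk'.1] at this
    simp [gAt, pIn, SemidirectProduct.mul_right, this]

/-- The points `j < M` not fixed by `h` with trivial colour. -/
noncomputable def suppBelow (M : Fin n) (h : WreathProduct G n) : Finset (Fin n) := by
  classical exact Finset.univ.filter fun j => j < M ∧ ¬ TrivAt h j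

theorem mem_suppBelow {M : Fin n} {h : WreathProduct G n} {j : Fin n} :
    j ∈ suppBelow M h ↔ j < M ∧ ¬ TrivAt h j := by
  simp [suppBelow]

/-! ### The relative commutant -/

theorem lt_of_right_eq {M k : Fin n} {h : WreathProduct G n} (hh : h ∈ Hmn G n (M + 1))
    (hk : h.right k = M) (hkM : k ≠ M) : k < M := by
  by_contra hlt
  have h1 : (M : ℕ) + 1 ≤ k := by
    have : M < k := lt_of_le_of_ne (not_lt.1 hlt) hkM.symm
    exact this
  exact hkM ((mem_Hmn.1 hh k h1).symm.trans hk)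

variable [Fintype G]

theorem YJM_eq (M : Fin n) : YJM G n M =
    ∑ k ∈ Finset.univ.filter (fun k : Fin n => k < M), ∑ g : G,
      MonoidAlgebra.of ℂ (WreathProduct G n) (jmTerm M k g) := rfl

theorem YJM_commute (M : Fin n) {w : WreathProduct G n} (hw : w ∈ Hmn G n M) :
    MonoidAlgebra.of ℂ _ w * YJM G n M = YJM G n M * MonoidAlgebra.of ℂ _ w := by
  have hwM := mem_Hmn.1 hw M le_rfl
  have hlt : ∀ v ∈ Hmn G n M, ∀ k < M, v.right k < M := by
    intro v hv k hk
    by_contra hlt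
    exact hlt ((v.right.injective (mem_Hmn.1 hv _ (not_lt.1 hlt))).symm ▸ hk)
  rw [YJM_eq]
  simp only [Finset.mul_sum, Finset.sum_mul, ← map_mul]
  refine Finset.sum_bij' (fun k _ => w.right k) (fun k _ => w.right⁻¹ k) ?_ ?_ ?_ ?_ ?_
  · intro k hk
    simpa using hlt w hw k (by simpa using hk)
  · intro k hk
    simpa using hlt w⁻¹ (inv_mem hw) k (by simpa using hk)
  · intro k _
    simp
  · intro k _
    simp
  · intro k hk
    have hk : k < M := by simpa using hk
    refine Fintype.sum_equiv
      ((Equiv.mulLeft (w.left M)).trans (Equiv.mulRight (w.left (w.right k))⁻¹)) _ _ fun g => ?_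
    rw [conj_jmTerm hk.ne g hwM]
    rfl

theorem YJM_mem (M : Fin n) :
    YJM G n M ∈ groupSubalgebra (WreathProduct G n) (Hmn G n (M + 1)) := by
  rw [YJM_eq]
  refine sum_mem fun k hk => sum_mem fun g _ => mem_groupSubalgebra (jmTerm_mem (by omega) ?_ g)
  have hk : k < M := by simpa using hk
  exact Nat.lt_succ_of_lt hk

instance : Finite (WreathProduct G n) :=
  Finite.of_injective (fun w => (w.left, w.right)) fun a b h => by
    simp only [Prod.mk.injEq] at h
    exact SemidirectProduct.ext h.1 h.2

/-- Averages with the same cofactor `h` agree at all points where `h` is trivial. -/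
theorem avg_jmTerm_eq {M k k' : Fin n} (hkM : k < M) (hkM' : k' < M) {h : WreathProduct G n}
    (hk : TrivAt h k) (hk' : TrivAt h k') (g g' : G) :
    avg (Hmn G n M) (MonoidAlgebra.of ℂ _ (jmTerm M k' g' * h)) =
      avg (Hmn G n M) (MonoidAlgebra.of ℂ _ (jmTerm M k g * h)) := by
  -- The colour `x = g'⁻¹ g` is chosen so that conjugation by `w` turns `g` into `g * x⁻¹ = g'`.
  set w : WreathProduct G n := gAt k' (g'⁻¹ * g) * pIn (Equiv.swap k k') with hw
  have hwr : w.right = Equiv.swap k k' := by simp [hw, gAt, pIn]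
  have hwl : w.left = Pi.mulSingle k' (g'⁻¹ * g) := by simp [hw, gAt, pIn]
  have hfix : ∀ j : Fin n, M ≤ j → w.right j = j := fun j hj => by
    rw [hwr, Equiv.swap_apply_of_ne_of_ne (hkM.trans_le hj).ne' (hkM'.trans_le hj).ne']
  have hwK : w ∈ Hmn G n M := mem_Hmn.2 hfix
  have hcomm : w * h = h * w := commute_swap hk hk' _
  have key := conj_jmTerm hkM.ne g (hfix M le_rfl)
  rw [hwr, hwl, Equiv.swap_apply_left, Pi.mulSingle_eq_same,
    Pi.mulSingle_eq_of_ne hkM'.ne'] at key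
  have key' : w * jmTerm M k g = jmTerm M k' g' * w := by
    rw [key]
    simp
  rw [← avg_conj _ hwK (jmTerm M k g * h)]
  congr 2
  rw [← mul_assoc w, key', mul_assoc _ w h, hcomm]
  group

/-- The averages of elements of `H_{M+1,n}` over `H_{M,n}` lie in every subalgebra containing the
centre of `ℂ[H_{M,n}]` and the Young–Jucys–Murphy element at the point `M`. -/
theorem avg_mem (M : Fin n) (A : Subalgebra ℂ (MonoidAlgebra ℂ (WreathProduct G n)))
    (hZ : subCenter (groupSubalgebra (WreathProduct G n) (Hmn G n M)) ⊆ A)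
    (hX : YJM G n M ∈ A) (h : WreathProduct G n) (hh : h ∈ Hmn G n (M + 1)) :
    avg (Hmn G n M) (MonoidAlgebra.of ℂ _ h) ∈ A := by
  classical
  induction hd : (suppBelow M h).card using Nat.strong_induction_on generalizing h with
  | _ d ih =>
  subst hd
  by_cases hM : h.right M = M
  · refine hZ (avg_mem_subCenter _ (mem_Hmn.2 fun j hj => ?_))
    rcases eq_or_ne j M with rfl | hne
    · exact hM
    · exact mem_Hmn.1 hh j (Nat.succ_le_of_lt (lt_of_le_of_ne hj fun e => hne (Fin.ext e.symm)))
  obtain ⟨k, hk⟩ := h.right.surjective M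
  have hkM : k ≠ M := fun e => hM (e ▸ hk)
  have hklt : k < M := lt_of_right_eq hh hk hkM
  set g := h.left M with hg
  set h' := jmTerm M k g * h with hh'
  have hh'k : TrivAt h' k := trivAt_jmTerm_mul hkM hk
  have hth' : jmTerm M k g * h' = h := by
    rw [hh', ← mul_assoc, jmTerm_mul_self hkM, one_mul]
  have hmem : h' ∈ Hmn G n (M + 1) :=
    mul_mem (jmTerm_mem (by omega) (Nat.lt_succ_of_lt hklt) g) hh
  have hcard : (suppBelow M h').card < (suppBelow M h).card := by
    refine Finset.card_lt_card ((Finset.ssubset_iff_of_subset fun j hj => ?_).2 ⟨k, ?_, ?_⟩)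
    · obtain ⟨hjM, hj⟩ := mem_suppBelow.1 hj
      refine mem_suppBelow.2 ⟨hjM, fun hj' => hj (hj'.jmTerm_mul ?_ hjM.ne g)⟩
      rintro rfl
      exact hj hh'k
    · exact mem_suppBelow.2 ⟨hklt, fun ht => hkM (ht.1.symm.trans hk)⟩
    · exact fun hc => (mem_suppBelow.1 hc).2 hh'k
  have hprod : YJM G n M * avg (Hmn G n M) (MonoidAlgebra.of ℂ _ h') ∈ A :=
    mul_mem hX (ih _ hcard h' hmem rfl)
  rw [← avg_mul_of_commute _ (fun w hw => YJM_commute M hw), YJM_eq] at hprod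
  simp only [Finset.sum_mul, ← map_mul, map_sum] at hprod
  -- Multiplying by a summand at a point of the support of the cofactor does not enlarge the
  -- support; at the other points every average equals that of `h`.
  rw [← Finset.sum_filter_add_sum_filter_not _ (fun k' => TrivAt h' k')] at hprod
  have hlow : ∑ k' ∈ (Finset.univ.filter (fun k : Fin n => k < M)).filter
      (fun k' => ¬ TrivAt h' k'), ∑ g' : G,
        avg (Hmn G n M) (MonoidAlgebra.of ℂ _ (jmTerm M k' g' * h')) ∈ A := by
    refine sum_mem fun k' hk' => sum_mem fun g' _ => ?_
    simp only [Finset.mem_filter, Finset.mem_univ, true_and] at hk'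
    refine ih _ (lt_of_le_of_lt (Finset.card_le_card fun j hj => ?_) hcard) _
      (mul_mem (jmTerm_mem (by omega) (Nat.lt_succ_of_lt hk'.1) g') hmem) rfl
    obtain ⟨hjM, hj⟩ := mem_suppBelow.1 hj
    refine mem_suppBelow.2 ⟨hjM, fun hj' => hj (hj'.jmTerm_mul ?_ hjM.ne g')⟩
    rintro rfl
    exact hk'.2 hj'
  have hmain := sub_mem hprod hlow
  rw [add_sub_cancel_right, Finset.sum_congr rfl (g := fun _ => (Fintype.card G : ℂ) •
    avg (Hmn G n M) (MonoidAlgebra.of ℂ _ h)), Finset.sum_const, ← Nat.cast_smul_eq_nsmul ℂ,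
    smul_smul] at hmain
  · refine (Submodule.smul_mem_iff (Subalgebra.toSubmodule A) ?_).1 hmain
    refine mul_ne_zero (Nat.cast_ne_zero.2 (Finset.card_ne_zero_of_mem (a := k) ?_))
      (Nat.cast_ne_zero.2 Fintype.card_ne_zero)
    simp [hklt, hh'k]
  · intro k' hk'
    simp only [Finset.mem_filter, Finset.mem_univ, true_and] at hk'
    rw [Finset.sum_congr rfl fun g' _ => avg_jmTerm_eq hklt hk'.1 hh'k hk'.2 g g', hth',
      Finset.sum_const, Nat.cast_smul_eq_nsmul, Finset.card_univ]

theorem relative_commutant_aux (M : Fin n) :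
    groupSubalgebra (WreathProduct G n) (Hmn G n (M + 1)) ⊓
      Subalgebra.centralizer ℂ
        ((groupSubalgebra (WreathProduct G n) (Hmn G n M) :
          Subalgebra ℂ (MonoidAlgebra ℂ (WreathProduct G n))) : Set _) =
    Algebra.adjoin ℂ
      (subCenter (groupSubalgebra (WreathProduct G n) (Hmn G n M)) ∪ {YJM G n M}) := by
  apply le_antisymm
  · rintro a ⟨ha, hc⟩
    set A := Algebra.adjoin ℂ
      (subCenter (groupSubalgebra (WreathProduct G n) (Hmn G n M)) ∪ {YJM G n M})
    have hZ : subCenter (groupSubalgebra (WreathProduct G n) (Hmn G n M)) ⊆ A :=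
      Set.subset_union_left.trans Algebra.subset_adjoin
    have hX : YJM G n M ∈ A := Algebra.subset_adjoin (Or.inr rfl)
    have hP : avg (Hmn G n M) a ∈ Subalgebra.toSubmodule A := by
      have hle : Submodule.span ℂ (Set.range fun h : Hmn G n (M + 1) =>
          MonoidAlgebra.of ℂ (WreathProduct G n) (h : WreathProduct G n)) ≤
          (Subalgebra.toSubmodule A).comap (avg (Hmn G n M)) := by
        refine Submodule.span_le.2 ?_
        rintro _ ⟨h, rfl⟩
        exact avg_mem M A hZ hX h h.2
      exact hle (mem_span_of_mem_groupSubalgebra ha)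
    let _ := Fintype.ofFinite (Hmn G n M)
    rw [avg_eq_of_commute _ fun w hw =>
      (Subalgebra.mem_centralizer_iff ℂ).1 hc _ (mem_groupSubalgebra hw)] at hP
    exact (Submodule.smul_mem_iff _ (Nat.cast_ne_zero.2 Fintype.card_ne_zero)).1 hP
  · refine Algebra.adjoin_le ?_
    rintro a (⟨ha, hc⟩ | rfl)
    · refine ⟨groupSubalgebra_mono (fun w hw => mem_Hmn.2 fun j hj =>
        mem_Hmn.1 hw j ((Nat.le_succ _).trans hj)) ha, ?_⟩
      exact (Subalgebra.mem_centralizer_iff ℂ).2 fun b hb => (hc b hb).symm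
    · exact ⟨YJM_mem M, (Subalgebra.mem_centralizer_iff ℂ).2
        (commute_groupSubalgebra fun w hw => YJM_commute M hw)⟩

end Wreath

/-- For `2 ≤ m ≤ n`, the relative commutant `Z(ℂ[H_{m,n}], ℂ[H_{m-1,n}])`
equals the subalgebra generated by the center of `ℂ[H_{m-1,n}]` together with the
Young–Jucys–Murphy element `X_m` (`= YJM` at 0-based index `m-1`). -/
theorem relative_commutant_eq_adjoin_center_YJM (G : Type) [Group G] [Fintype G]
    (n m : ℕ) (h2 : 2 ≤ m) (hmn : m ≤ n) :
    groupSubalgebra (WreathProduct G n) (Hmn G n m) ⊓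
      Subalgebra.centralizer ℂ
        ((groupSubalgebra (WreathProduct G n) (Hmn G n (m - 1)) :
          Subalgebra ℂ (MonoidAlgebra ℂ (WreathProduct G n))) : Set _) =
    Algebra.adjoin ℂ
      (subCenter (groupSubalgebra (WreathProduct G n) (Hmn G n (m - 1))) ∪
        {YJM G n ⟨m - 1, by omega⟩}) := by 
  have hm : m - 1 + 1 = m := by omega
  have h := relative_commutant_aux (G := G) (⟨m - 1, by omega⟩ : Fin n)
  simp only [hm] at h
  exact h
end

section
/- For 1 ≤ m ≤ n, the subalgebra GZ_{m,n} of ℂ[G≀S_n] generated by the union of the centers of ℂ[H_{1,n}], ℂ[H_{2,n}], …, ℂ[H_{m,n}] equals the subalgebra of ℂ[G≀S_n] generated by the center of ℂ[H_{1,n}] ≅ ℂ[Gⁿ] together with the Young–Jucys–Murphy elements X_1, X_2, …, X_m. -/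
namespace WreathGZ

/-! ### Averaging over a subgroup in a group algebra -/

section General

variable {K : Type*} [Group K]

lemma of_mem_groupSubalgebra {H : Subgroup K} {h : K} (hh : h ∈ H) :
    MonoidAlgebra.of ℂ K h ∈ groupSubalgebra K H :=
  Algebra.subset_adjoin ⟨⟨h, hh⟩, rfl⟩

lemma groupSubalgebra_toSubmodule (H : Subgroup K) :
    Subalgebra.toSubmodule (groupSubalgebra K H) =
      Submodule.span ℂ (Set.range fun h : H => MonoidAlgebra.of ℂ K (h : K)) := by
  have e : (Set.range fun h : H => MonoidAlgebra.of ℂ K (h : K)) =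
      ((MonoidHom.mrange ((MonoidAlgebra.of ℂ K).comp H.subtype) :
        Submonoid (MonoidAlgebra ℂ K)) : Set (MonoidAlgebra ℂ K)) := by
    ext x; simp
  rw [groupSubalgebra, Algebra.adjoin_eq_span, e, Submonoid.closure_eq]

lemma commute_of_mem {H : Subgroup K} {a : MonoidAlgebra ℂ K}
    (ha : ∀ h ∈ H, a * MonoidAlgebra.of ℂ K h = MonoidAlgebra.of ℂ K h * a) :
    ∀ b ∈ groupSubalgebra K H, a * b = b * a := by
  intro b hb
  induction hb using Algebra.adjoin_induction with
  | mem x hx => obtain ⟨h, rfl⟩ := hx; exact ha h h.2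
  | algebraMap r => exact (Algebra.commutes r a).symm
  | add x y _ _ hx hy => rw [mul_add, add_mul, hx, hy]
  | mul x y _ _ hx hy => rw [← mul_assoc, hx, mul_assoc, hy, mul_assoc]

/-- The unnormalised averaging operator `a ↦ ∑_{v ∈ H} v a v⁻¹` on `ℂ[K]`. -/
noncomputable def conjSum (H : Subgroup K) [Fintype H] :
    MonoidAlgebra ℂ K →ₗ[ℂ] MonoidAlgebra ℂ K :=
  ∑ v : H, (LinearMap.mulLeft ℂ (MonoidAlgebra.of ℂ K (v : K))) ∘ₗ
    (LinearMap.mulRight ℂ (MonoidAlgebra.of ℂ K ((v : K)⁻¹)))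

lemma conjSum_apply (H : Subgroup K) [Fintype H] (a : MonoidAlgebra ℂ K) :
    conjSum H a = ∑ v : H, MonoidAlgebra.of ℂ K (v : K) * a * MonoidAlgebra.of ℂ K ((v : K)⁻¹) := by
  simp [conjSum, LinearMap.sum_apply, mul_assoc]

lemma conjSum_mul_left (H : Subgroup K) [Fintype H] {x : MonoidAlgebra ℂ K}
    (hx : ∀ h ∈ H, x * MonoidAlgebra.of ℂ K h = MonoidAlgebra.of ℂ K h * x)
    (a : MonoidAlgebra ℂ K) : conjSum H (x * a) = x * conjSum H a := by
  rw [conjSum_apply, conjSum_apply, Finset.mul_sum]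
  refine Finset.sum_congr rfl fun v _ => ?_
  rw [← mul_assoc, ← mul_assoc, ← mul_assoc, hx v v.2]

lemma conjSum_conj (H : Subgroup K) [Fintype H] {w : K} (hw : w ∈ H) (h : K) :
    conjSum H (MonoidAlgebra.of ℂ K (w * h * w⁻¹)) = conjSum H (MonoidAlgebra.of ℂ K h) := by
  rw [conjSum_apply, conjSum_apply]
  refine Fintype.sum_equiv (Equiv.mulRight (⟨w, hw⟩ : H)) _ _ fun v => ?_
  simp only [← map_mul, Equiv.coe_mulRight, Subgroup.coe_mul]
  congr 1
  group

/-- An element of `ℂ[K]` centralising `H` is, up to the scalar `|H|`, its own average. -/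
lemma conjSum_of_commute (H : Subgroup K) [Fintype H] {x : MonoidAlgebra ℂ K}
    (hx : ∀ h ∈ H, x * MonoidAlgebra.of ℂ K h = MonoidAlgebra.of ℂ K h * x) :
    conjSum H x = (Fintype.card H : ℂ) • x := by
  rw [conjSum_apply, Finset.sum_congr rfl (g := fun _ => x)]
  · simp [Nat.cast_smul_eq_nsmul]
  · intro v _
    rw [← hx v v.2, mul_assoc, ← map_mul, mul_inv_cancel, map_one, mul_one]

lemma conjSum_mem_subCenter (H : Subgroup K) [Fintype H] {h : K} (hh : h ∈ H) :
    conjSum H (MonoidAlgebra.of ℂ K h) ∈ subCenter (groupSubalgebra K H) := by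
  constructor
  · rw [conjSum_apply]
    refine sum_mem fun v _ => ?_
    exact mul_mem (mul_mem (of_mem_groupSubalgebra v.2) (of_mem_groupSubalgebra hh))
      (of_mem_groupSubalgebra (inv_mem v.2))
  · apply commute_of_mem
    intro w hw
    rw [conjSum_apply, Finset.sum_mul, Finset.mul_sum]
    refine (Fintype.sum_equiv (Equiv.mulLeft (⟨w, hw⟩ : H)) _ _ fun v => ?_).symm
    simp only [← map_mul, Equiv.coe_mulLeft, Subgroup.coe_mul]
    congr 1
    group

end General

/-! ### The wreath product and its generalised transpositions -/

section Wreath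

variable {G : Type*} [Group G] {n : ℕ}

lemma mem_Hmn {m : ℕ} {h : WreathProduct G n} :
    h ∈ Hmn G n m ↔ ∀ j : Fin n, m ≤ (j : ℕ) → h.right j = j := by
  simp [Hmn, Subgroup.mem_iInf, MulAction.mem_stabilizer_iff]

lemma Hmn_mono {m m' : ℕ} (hm : m ≤ m') : Hmn G n m ≤ Hmn G n m' := fun _ hx =>
  mem_Hmn.2 fun j hj => mem_Hmn.1 hx j (hm.trans hj)

lemma mem_Hmn_of_fix {p : Fin n} {h : WreathProduct G n} (hh : h ∈ Hmn G n (p + 1))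
    (hp : h.right p = p) : h ∈ Hmn G n p := by
  refine mem_Hmn.2 fun j hj => ?_
  rcases eq_or_lt_of_le hj with e | e
  · rw [← Fin.ext e, hp]
  · exact mem_Hmn.1 hh j e

@[simp] lemma wreathHom_apply (π : Equiv.Perm (Fin n)) (f : Fin n → G) (j : Fin n) :
    wreathHom G n π f j = f (π.symm j) := rfl

/-- The generalised transposition `(g⁻¹)^{(k)} g^{(i)} (k,i)`, given by its coordinates, for
`k ≠ i`. -/
def tw (k i : Fin n) (g : G) : WreathProduct G n :=
  ⟨fun q => if q = k then g⁻¹ else if q = i then g else 1, Equiv.swap k i⟩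

lemma tw_eq {k i : Fin n} (hki : k ≠ i) (g : G) :
    gAt k g⁻¹ * gAt i g * pIn (Equiv.swap k i) = tw k i g := by
  apply SemidirectProduct.ext
  · funext q
    by_cases h1 : q = k
    · subst h1; simp [gAt, pIn, tw, hki]
    · simp [gAt, pIn, tw, h1, Pi.mulSingle_apply]
  · simp [gAt, pIn, tw]

lemma tw_symm {k i : Fin n} (hki : k ≠ i) (g : G) : tw i k g⁻¹ = tw k i g := by
  apply SemidirectProduct.ext
  · funext q
    simp only [tw]
    split_ifs <;> simp_all
  · simp [tw, Equiv.swap_comm]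

lemma tw_mul_self {k i : Fin n} (hki : k ≠ i) (g : G) : tw k i g * tw k i g = 1 := by
  apply SemidirectProduct.ext
  · funext q
    simp only [tw, SemidirectProduct.mul_left, Pi.mul_apply, wreathHom_apply, Equiv.symm_swap,
      SemidirectProduct.one_left, Pi.one_apply]
    by_cases h1 : q = k
    · subst h1; simp [hki.symm]
    · by_cases h2 : q = i
      · subst h2; simp [h1]
      · simp [h1, h2, Equiv.swap_apply_of_ne_of_ne]
  · simp [tw]

/-- Conjugation by `h = (f, π)` sends the generalised transposition of `k`, `i` with label `g` to
that of `π k`, `π i` with label `f_{π i} g f_{π k}⁻¹`. -/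
lemma tw_conj {k i : Fin n} (hki : k ≠ i) (g : G) (h : WreathProduct G n) :
    h * tw k i g = tw (h.right k) (h.right i)
      (h.left (h.right i) * g * (h.left (h.right k))⁻¹) * h := by
  have hne : h.right k ≠ h.right i := fun e => hki (h.right.injective e)
  apply SemidirectProduct.ext
  · funext q
    obtain ⟨r, rfl⟩ := h.right.surjective q
    simp only [tw, SemidirectProduct.mul_left, Pi.mul_apply, wreathHom_apply, Equiv.symm_swap,
      Equiv.symm_apply_apply, h.right.injective.eq_iff]
    by_cases h1 : r = k
    · subst h1; simp [mul_assoc]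
    · by_cases h2 : r = i
      · subst h2; simp [h1]
      · simp [h1, h2, Equiv.swap_apply_of_ne_of_ne]
  · simp only [tw, SemidirectProduct.mul_right]
    ext q : 1
    simp only [Equiv.Perm.mul_apply]
    exact (h.right.injective.swap_apply k i q).symm ▸ rfl

lemma tw_mem {m : ℕ} {k i : Fin n} (hk : (k : ℕ) < m) (hi : (i : ℕ) < m) (g : G) :
    tw k i g ∈ Hmn G n m := by
  refine mem_Hmn.2 fun j hj => ?_
  exact Equiv.swap_apply_of_ne_of_ne (by rintro rfl; omega) (by rintro rfl; omega)

/-! ### Supports and peeling off a transposition -/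

open Classical in
/-- The points other than `p` on which `h` acts nontrivially: those moved by the permutation
part, or carrying a nontrivial `G`-coordinate. -/
noncomputable def supp (p : Fin n) (h : WreathProduct G n) : Finset (Fin n) :=
  Finset.univ.filter fun q => q ≠ p ∧ (h.right q ≠ q ∨ h.left q ≠ 1)

lemma ne_of_mem_supp {p q : Fin n} {h : WreathProduct G n} (hq : q ∈ supp p h) : q ≠ p := by
  simp only [supp, Finset.mem_filter] at hq
  exact hq.2.1

lemma notMem_supp {p q : Fin n} (hq : q ≠ p) {h : WreathProduct G n} :
    q ∉ supp p h ↔ h.right q = q ∧ h.left q = 1 := by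
  simp only [supp, Finset.mem_filter, Finset.mem_univ, true_and, not_and, not_or, not_not]
  tauto

/-- Multiplying by a generalised transposition of `k` and `p` enlarges the support at most by
`k`. -/
lemma notMem_supp_tw_mul {p k q : Fin n} (hq : q ≠ p) (hqk : q ≠ k) {h : WreathProduct G n}
    (hs : q ∉ supp p h) (g : G) : q ∉ supp p (tw k p g * h) := by
  rw [notMem_supp hq] at hs ⊢
  simp [tw, hs.1, hs.2, hqk, hq, Equiv.swap_apply_of_ne_of_ne]

/-- If neither `a` nor `k` is in the support of `u`, then `tw a p g₀ * u` and `tw k p g * u` are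
conjugate under `H_{p,n}`: the conjugating elements are supported on `{a, k}` and commute with
`u`. -/
lemma exists_conj {p a k : Fin n} (ha : a < p) (hk : k < p) {u : WreathProduct G n}
    (hau : a ∉ supp p u) (hku : k ∉ supp p u) (g₀ g : G) :
    ∃ w ∈ Hmn G n p, tw k p g * u = w * (tw a p g₀ * u) * w⁻¹ := by
  rw [notMem_supp ha.ne] at hau
  rw [notMem_supp hk.ne] at hku
  have hfix : ∀ q, u.right q = q → u.right.symm q = q := fun q hq => by
    rw [Equiv.symm_apply_eq, hq]
  set w : WreathProduct G n := ⟨Pi.mulSingle k (g⁻¹ * g₀), Equiv.swap a k⟩ with hw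
  have hwu : w * u = u * w := by
    apply SemidirectProduct.ext
    · funext q
      simp only [hw, SemidirectProduct.mul_left, Pi.mul_apply, wreathHom_apply, Equiv.symm_swap,
        Pi.mulSingle_apply]
      by_cases h1 : q = k
      · subst h1; simp [hfix _ hku.1, hku.2, hau.2]
      · have : u.right.symm q ≠ k := fun e => h1 (by rw [← hku.1, ← e]; simp)
        by_cases h2 : q = a
        · subst h2; simp [h1, hfix _ hau.1, hku.2, hau.2]
        · simp [h1, h2, this, Equiv.swap_apply_of_ne_of_ne]
    · simp only [hw, SemidirectProduct.mul_right]
      have := Equiv.mul_swap_eq_swap_mul u.right a k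
      rw [this, hau.1, hku.1]
  refine ⟨w, mem_Hmn.2 fun j hj => Equiv.swap_apply_of_ne_of_ne ?_ ?_, ?_⟩
  · rintro rfl; exact absurd ha (not_lt.2 hj)
  · rintro rfl; exact absurd hk (not_lt.2 hj)
  · rw [eq_mul_inv_iff_mul_eq, mul_assoc, ← hwu, ← mul_assoc, ← mul_assoc, tw_conj ha.ne]
    congr 2
    have : Equiv.swap a k p = p := Equiv.swap_apply_of_ne_of_ne ha.ne' hk.ne'
    simp [hw, this, hk.ne']

/-- Every `h` whose permutation part sends `a` to `p` factors as a generalised transposition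
of `a` and `p` times an element whose support misses `a`. -/
lemma notMem_supp_peel {p a : Fin n} (hap : a ≠ p) {h : WreathProduct G n}
    (ha : h.right a = p) : a ∉ supp p (tw a p (h.left p) * h) := by
  rw [notMem_supp hap]
  simp [tw, ha]

/-! ### Jucys–Murphy elements -/

variable [Fintype G]

lemma YJM_eq (i : Fin n) : YJM G n i =
    ∑ k ∈ Finset.univ.filter (fun k : Fin n => k < i), ∑ g : G,
      MonoidAlgebra.of ℂ (WreathProduct G n) (tw k i g) := by
  refine Finset.sum_congr rfl fun k hk => Finset.sum_congr rfl fun g _ => ?_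
  rw [tw_eq (Finset.mem_filter.1 hk).2.ne]

/-- The sum of all generalised transpositions in `H_{m,n}`, each of them occurring twice. -/
noncomputable def twSum (G : Type*) [Group G] [Fintype G] (n m : ℕ) :
    MonoidAlgebra ℂ (WreathProduct G n) :=
  ∑ k : Fin n, ∑ i : Fin n, if k ≠ i ∧ (k : ℕ) < m ∧ (i : ℕ) < m then
    ∑ g : G, MonoidAlgebra.of ℂ (WreathProduct G n) (tw k i g) else 0

lemma twSum_mem_subCenter (m : ℕ) :
    twSum G n m ∈ subCenter (groupSubalgebra (WreathProduct G n) (Hmn G n m)) := by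
  constructor
  · refine sum_mem fun k _ => sum_mem fun i _ => ?_
    split_ifs with h
    · exact sum_mem fun g _ => of_mem_groupSubalgebra (tw_mem h.2.1 h.2.2 g)
    · exact zero_mem _
  · apply commute_of_mem
    intro h hh
    have hlt : ∀ j : Fin n, (h.right j : ℕ) < m ↔ (j : ℕ) < m := by
      intro j
      rw [mem_Hmn] at hh
      constructor
      · intro h1
        by_contra h2
        rw [hh j (not_lt.1 h2)] at h1
        exact h2 h1
      · intro h1
        by_contra h2
        have := h.right.injective (hh _ (not_lt.1 h2))
        rw [this] at h2
        exact h2 h1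
    rw [twSum, Finset.sum_mul, Finset.mul_sum]
    symm
    refine Fintype.sum_equiv h.right _ _ fun k => ?_
    rw [Finset.sum_mul, Finset.mul_sum]
    refine Fintype.sum_equiv h.right _ _ fun i => ?_
    simp only [hlt, h.right.injective.ne_iff]
    split_ifs with hc
    · rw [Finset.sum_mul, Finset.mul_sum]
      refine Fintype.sum_equiv ((Equiv.mulLeft (h.left (h.right i))).trans
        (Equiv.mulRight (h.left (h.right k))⁻¹)) _ _ fun g => ?_
      rw [← map_mul, ← map_mul, tw_conj hc.1]
      rfl
    · simp

/-- The Jucys–Murphy element is half the difference of two consecutive central elements. -/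
lemma two_smul_YJM (p : Fin n) :
    (2 : ℂ) • YJM G n p = twSum G n (p + 1) - twSum G n p := by
  set F : Fin n → Fin n → MonoidAlgebra ℂ (WreathProduct G n) :=
    fun k i => ∑ g : G, MonoidAlgebra.of ℂ (WreathProduct G n) (tw k i g) with hF
  have hsymm : ∀ k, k ≠ p → F p k = F k p := by
    intro k hk
    refine Fintype.sum_equiv (Equiv.inv G) _ _ fun g => ?_
    rw [← tw_symm hk.symm]; rfl
  have hY : YJM G n p = ∑ k : Fin n, if k < p then F k p else 0 := by
    rw [YJM_eq, Finset.sum_filter]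
  have key : ∀ k i : Fin n,
      ((if k ≠ i ∧ (k : ℕ) < (p : ℕ) + 1 ∧ (i : ℕ) < (p : ℕ) + 1 then F k i else 0) -
        if k ≠ i ∧ (k : ℕ) < (p : ℕ) ∧ (i : ℕ) < (p : ℕ) then F k i else 0) =
      (if i = p then (if k < p then F k p else 0) else 0) +
        (if k = p then (if i < p then F i p else 0) else 0) := by
    intro k i
    by_cases hk : k = p <;> by_cases hi : i = p
    · subst hk; subst hi; simp
    · subst hk
      by_cases h : i < k
      · have h' : (i : ℕ) < k := h
        simp [hi, h, h'.trans (Nat.lt_succ_self _), Ne.symm hi, hsymm i hi]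
      · have h' : ¬ (i : ℕ) < (k : ℕ) + 1 := by
          intro h2; apply hi; apply Fin.ext; have : ¬ (i : ℕ) < k := h; omega
        simp [hi, h, h']
    · subst hi
      by_cases h : k < i
      · have h' : (k : ℕ) < i := h
        simp [hk, h, h'.trans (Nat.lt_succ_self _)]
      · have h' : ¬ (k : ℕ) < (i : ℕ) + 1 := by
          intro h2; apply hk; apply Fin.ext; have : ¬ (k : ℕ) < i := h; omega
        simp [hk, h, h']
    · have h1 : (k : ℕ) < (p : ℕ) + 1 ↔ (k : ℕ) < p := by
        have : (k : ℕ) ≠ p := fun e => hk (Fin.ext e)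
        omega
      have h2 : (i : ℕ) < (p : ℕ) + 1 ↔ (i : ℕ) < p := by
        have : (i : ℕ) ≠ p := fun e => hi (Fin.ext e)
        omega
      simp [hk, hi, h1, h2]
  rw [twSum, twSum, ← Finset.sum_sub_distrib]
  simp_rw [← Finset.sum_sub_distrib]
  rw [Finset.sum_congr rfl fun k _ => Finset.sum_congr rfl fun i _ => key k i]
  simp_rw [Finset.sum_add_distrib]
  rw [Finset.sum_comm (γ := Fin n)]
  simp [hY, two_smul]

lemma YJM_eq_smul (p : Fin n) :
    YJM G n p = (2⁻¹ : ℂ) • (twSum G n (p + 1) - twSum G n p) := by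
  rw [← two_smul_YJM, smul_smul]; norm_num

/-- The Jucys–Murphy element of `p` centralises `H_{p,n}`, being a difference of elements central
in `ℂ[H_{p+1,n}]` and in `ℂ[H_{p,n}]`. -/
lemma YJM_commute (p : Fin n) : ∀ h ∈ Hmn G n p,
    YJM G n p * MonoidAlgebra.of ℂ _ h = MonoidAlgebra.of ℂ _ h * YJM G n p := by
  intro h hh
  have h1 := (twSum_mem_subCenter (G := G) (n := n) (p + 1)).2 _
    (of_mem_groupSubalgebra (Hmn_mono (Nat.le_succ _) hh))
  have h2 := (twSum_mem_subCenter (G := G) (n := n) p).2 _ (of_mem_groupSubalgebra hh)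
  rw [YJM_eq_smul, smul_mul_assoc, mul_smul_comm, sub_mul, mul_sub, h1, h2]

/-! ### Descent from `H_{p+1,n}` to `H_{p,n}` -/

/-- The inductive heart of the proof: all averages `∑_{v ∈ H_{p,n}} v h v⁻¹` with `h ∈ H_{p+1,n}`
lie in the algebra generated by the centre of `ℂ[H_{p,n}]` and the Jucys–Murphy element of `p`,
by strong induction on the size of the support of `h`. -/
lemma conjSum_mem (p : Fin n) [Fintype (Hmn G n p)] (N : ℕ) :
    ∀ h ∈ Hmn G n (p + 1), (supp p h).card = N →
    conjSum (Hmn G n p) (MonoidAlgebra.of ℂ _ h) ∈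
      Algebra.adjoin ℂ (subCenter (groupSubalgebra (WreathProduct G n) (Hmn G n p)) ∪
        {YJM G n p}) := by
  induction N using Nat.strong_induction_on with
  | _ N ih =>
  intro h hh hN
  subst hN
  set B := Algebra.adjoin ℂ (subCenter (groupSubalgebra (WreathProduct G n) (Hmn G n p)) ∪
        {YJM G n p}) with hB
  by_cases hp : h.right p = p
  · exact Algebra.subset_adjoin (Or.inl (conjSum_mem_subCenter _ (mem_Hmn_of_fix hh hp)))
  obtain ⟨a, ha⟩ := h.right.surjective p
  have hap : a ≠ p := by rintro rfl; exact hp ha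
  have ha_lt : a < p := by
    by_contra hlt
    have h1 : (p : ℕ) + 1 ≤ a := lt_of_le_of_ne (not_lt.1 hlt) hap.symm
    exact hap ((mem_Hmn.1 hh a h1).symm.trans ha)
  set u := tw a p (h.left p) * h with hu
  have hau : a ∉ supp p u := notMem_supp_peel hap ha
  have hhu : h = tw a p (h.left p) * u := by rw [hu, ← mul_assoc, tw_mul_self hap, one_mul]
  have hpt : ∀ k : Fin n, k < p → ∀ g : G, tw k p g ∈ Hmn G n (p + 1) := fun k hk g =>
    tw_mem (Nat.lt_succ_of_lt hk) (Nat.lt_succ_self _) g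
  have huH : u ∈ Hmn G n (p + 1) := mul_mem (hpt a ha_lt _) hh
  have hcard : (supp p u).card < (supp p h).card := by
    apply Finset.card_lt_card
    refine ⟨fun q hq => ?_, fun hsub => hau (hsub ?_)⟩
    · by_contra hqh
      have hqp : q ≠ p := ne_of_mem_supp hq
      exact notMem_supp_tw_mul hqp (fun e => hau (by rwa [e] at hq)) hqh _ hq
    · by_contra hah
      rw [notMem_supp hap] at hah
      exact hap (hah.1.symm.trans ha)
  -- `u` has smaller support than `h`, so the induction hypothesis applies to its average.
  have hXu : conjSum (Hmn G n p) (YJM G n p * MonoidAlgebra.of ℂ _ u) ∈ B := by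
    rw [conjSum_mul_left _ (YJM_commute p)]
    exact mul_mem (Algebra.subset_adjoin (Or.inr rfl)) (ih _ hcard u huH rfl)
  have hexp : conjSum (Hmn G n p) (YJM G n p * MonoidAlgebra.of ℂ _ u) =
      ∑ k ∈ Finset.univ.filter (fun k : Fin n => k < p), ∑ g : G,
        conjSum (Hmn G n p) (MonoidAlgebra.of ℂ _ (tw k p g * u)) := by
    rw [YJM_eq, Finset.sum_mul, map_sum]
    refine Finset.sum_congr rfl fun k _ => ?_
    rw [Finset.sum_mul, map_sum]
    simp_rw [map_mul]
  classical
  set S := Finset.univ.filter (fun k : Fin n => k < p) with hS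
  rw [hexp, ← Finset.sum_filter_add_sum_filter_not S (fun k => k ∈ supp p u)] at hXu
  -- A transposition at a point `k` of the support of `u` does not enlarge the support.
  have hbad : (∑ k ∈ S with k ∈ supp p u, ∑ g : G,
      conjSum (Hmn G n p) (MonoidAlgebra.of ℂ _ (tw k p g * u))) ∈ B := by
    refine sum_mem fun k hk => sum_mem fun g _ => ?_
    obtain ⟨hkS, hku⟩ := Finset.mem_filter.1 hk
    refine ih _ (lt_of_le_of_lt (Finset.card_le_card fun q hq => ?_) hcard) _
      (mul_mem (hpt k (Finset.mem_filter.1 hkS).2 g) huH) rfl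
    by_contra hqu
    have hqp : q ≠ p := ne_of_mem_supp hq
    exact notMem_supp_tw_mul hqp (fun e => hqu (by rwa [e])) hqu _ hq
  -- For all other `k`, every term is conjugate to `h` under `H_{p,n}`.
  have hgood : (∑ k ∈ S with k ∉ supp p u, ∑ g : G,
      conjSum (Hmn G n p) (MonoidAlgebra.of ℂ _ (tw k p g * u))) =
      (((S.filter fun k => k ∉ supp p u).card * Fintype.card G : ℕ) : ℂ) •
        conjSum (Hmn G n p) (MonoidAlgebra.of ℂ _ h) := by
    have : ∀ k ∈ S.filter (fun k => k ∉ supp p u), ∀ g : G,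
        conjSum (Hmn G n p) (MonoidAlgebra.of ℂ _ (tw k p g * u)) =
        conjSum (Hmn G n p) (MonoidAlgebra.of ℂ _ h) := by
      intro k hk g
      obtain ⟨hkS, hku⟩ := Finset.mem_filter.1 hk
      obtain ⟨w, hw, e⟩ := exists_conj ha_lt (Finset.mem_filter.1 hkS).2 hau hku (h.left p) g
      rw [e, conjSum_conj _ hw, ← hhu]
    rw [Finset.sum_congr rfl fun k hk => Finset.sum_congr rfl fun g _ => this k hk g]
    rw [Finset.sum_const, Finset.sum_const, smul_smul, Finset.card_univ, Nat.cast_smul_eq_nsmul]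
  -- The scalar does not vanish because `a` itself is one of these points.
  have hne : (((S.filter fun k => k ∉ supp p u).card * Fintype.card G : ℕ) : ℂ) ≠ 0 := by
    rw [Nat.cast_ne_zero]
    refine mul_ne_zero (Finset.card_ne_zero.2 ⟨a, ?_⟩) Fintype.card_ne_zero
    simp [hS, ha_lt, hau]
  have h3 := sub_mem hXu hbad
  rw [add_sub_cancel_left, hgood] at h3
  have h4 := B.smul_mem h3 ((((S.filter fun k => k ∉ supp p u).card * Fintype.card G : ℕ) : ℂ)⁻¹)
  rwa [smul_smul, inv_mul_cancel₀ hne, one_smul] at h4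

/-- A central element of `ℂ[H_{p+1,n}]` is a multiple of its own average over `H_{p,n}`, hence a
linear combination of the averages of group elements. -/
lemma subCenter_succ_subset (p : Fin n) :
    subCenter (groupSubalgebra (WreathProduct G n) (Hmn G n (p + 1))) ⊆
      Algebra.adjoin ℂ (subCenter (groupSubalgebra (WreathProduct G n) (Hmn G n p)) ∪
        {YJM G n p}) := by
  intro z hz
  have : Finite (WreathProduct G n) := Finite.of_equiv _ SemidirectProduct.equivProd.symm
  have : Fintype (Hmn G n p) := Fintype.ofFinite _
  set B := Algebra.adjoin ℂ (subCenter (groupSubalgebra (WreathProduct G n) (Hmn G n p)) ∪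
        {YJM G n p}) with hB
  have h1 : conjSum (Hmn G n p) z ∈ B := by
    have h2 : Subalgebra.toSubmodule (groupSubalgebra (WreathProduct G n) (Hmn G n (p + 1))) ≤
        (Subalgebra.toSubmodule B).comap (conjSum (Hmn G n p)) := by
      rw [groupSubalgebra_toSubmodule, Submodule.span_le]
      rintro _ ⟨h, rfl⟩
      exact conjSum_mem p _ (h : WreathProduct G n) h.2 rfl
    exact h2 hz.1
  rw [conjSum_of_commute _ fun h hh =>
    hz.2 _ (of_mem_groupSubalgebra (Hmn_mono (Nat.le_succ _) hh))] at h1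
  have h4 := B.smul_mem h1 ((Fintype.card (Hmn G n p) : ℂ)⁻¹)
  rwa [smul_smul, inv_mul_cancel₀ (Nat.cast_ne_zero.2 Fintype.card_ne_zero), one_smul] at h4

end Wreath

end WreathGZ

/-- For `1 ≤ m ≤ n`, the Gelfand–Tsetlin algebra `GZ_{m,n}` generated by the
centers of `ℂ[H_{1,n}], …, ℂ[H_{m,n}]` equals the subalgebra generated by the center of
`ℂ[H_{1,n}] ≅ ℂ[Gⁿ]` together with the YJM elements `X_1, …, X_m` (0-based indices `< m`). -/
theorem GZ_eq_adjoin_center_YJM (G : Type) [Group G] [Fintype G]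
    (n m : ℕ) (h1 : 1 ≤ m) (hmn : m ≤ n) :
    Algebra.adjoin ℂ
      (⋃ j ∈ Set.Icc 1 m, subCenter (groupSubalgebra (WreathProduct G n) (Hmn G n j))) =
    Algebra.adjoin ℂ
      (subCenter (groupSubalgebra (WreathProduct G n) (Hmn G n 1)) ∪
        (⋃ i : {i : Fin n // (i : ℕ) < m}, {YJM G n i})) := by
  apply le_antisymm
  · rw [Algebra.adjoin_le_iff]
    refine Set.iUnion₂_subset fun j hj => ?_
    obtain ⟨hj1, hjm⟩ := hj
    induction j, hj1 using Nat.le_induction with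
    | base => exact fun x hx => Algebra.subset_adjoin (Or.inl hx)
    | succ j hj1 ih =>
      refine (WreathGZ.subCenter_succ_subset (⟨j, by omega⟩ : Fin n)).trans ?_
      refine Algebra.adjoin_le (Set.union_subset (ih (by omega)) ?_)
      rintro _ rfl
      exact Algebra.subset_adjoin (Or.inr (Set.mem_iUnion.2 ⟨⟨⟨j, by omega⟩, by simp; omega⟩, rfl⟩))
  · refine Algebra.adjoin_le (Set.union_subset ?_ (Set.iUnion_subset ?_))
    · exact fun x hx => Algebra.subset_adjoin (Set.mem_iUnion₂.2 ⟨1, ⟨le_rfl, h1⟩, hx⟩)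
    · rintro ⟨p, hp⟩ _ rfl
      have key : ∀ j, 1 ≤ j → j ≤ m → WreathGZ.twSum G n j ∈ Algebra.adjoin ℂ
          (⋃ j ∈ Set.Icc 1 m, subCenter (groupSubalgebra (WreathProduct G n) (Hmn G n j))) :=
        fun j h1 h2 => Algebra.subset_adjoin
          (Set.mem_iUnion₂.2 ⟨j, ⟨h1, h2⟩, WreathGZ.twSum_mem_subCenter j⟩)
      rcases Nat.eq_zero_or_pos (p : ℕ) with h0 | h0
      · -- There is no index below the first one, so the first Jucys–Murphy element is `0`.
        have : YJM G n p = 0 := by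
          rw [YJM, Finset.filter_false_of_mem, Finset.sum_empty]
          intro k _ hk
          have : (k : ℕ) < p := hk
          omega
        rw [this]
        exact zero_mem _
      · rw [WreathGZ.YJM_eq_smul]
        exact Subalgebra.smul_mem _ (sub_mem (key _ (by omega) hp) (key _ h0 hp.le)) _
end
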